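/- arXiv:1109.4505 — 3 statements merged into one kernel-verified Lean document; each statement's English description precedes it below -/
import Mathlib

section
/- Let G be a finite group. For a subgroup H of G, let π^H : G → Aut⁺(C(G/H)) be the positive representation defined by π^H_s e_{tH} = e_{stH}. Then: (a) each π^H is band irreducible; (b) if subgroups H₁ and H₂ of G are conjugate, then π^{H₁} and π^{H₂} are order equivalent; (c) conversely, if π^{H₁} and π^{H₂} are order equivalent, then H₁ and H₂ are conjugate; and (d) every band irreducible positive representation of G in a nonzero finite dimensional Archimedean Riesz space is order equivalent to π^H for some subgroup H of G. -/
/-- A (Riesz) ideal of an ordered real vector space: a submodule `I` such that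
`|x| ≤ |y|` and `y ∈ I` imply `x ∈ I`. -/
def IsRieszIdeal {E : Type*} [AddCommGroup E] [Lattice E] [Module ℝ E]
    (I : Submodule ℝ E) : Prop :=
  ∀ x y : E, |x| ≤ |y| → y ∈ I → x ∈ I

/-- A band: an ideal closed under suprema of its subsets (when they exist in `E`). -/
def IsBand {E : Type*} [AddCommGroup E] [Lattice E] [Module ℝ E]
    (B : Submodule ℝ E) : Prop :=
  IsRieszIdeal B ∧ ∀ (D : Set E) (x : E), D ⊆ (B : Set E) → IsLUB D x → x ∈ B

/-- The disjoint complement of a set `D`. -/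
def disjComplement {E : Type*} [AddCommGroup E] [Lattice E] (D : Set E) : Set E :=
  {x : E | ∀ y ∈ D, |x| ⊓ |y| = 0}

/-- A projection band: a band `B` with `E = B ⊕ Bᵈ`. -/
def IsProjectionBand {E : Type*} [AddCommGroup E] [Lattice E] [Module ℝ E]
    (B : Submodule ℝ E) : Prop :=
  IsBand B ∧ ∀ x : E, ∃ y ∈ B, ∃ z ∈ disjComplement (B : Set E), x = y + z

/-- An order direct sum decomposition `E = L ⊕ M`: every element decomposes uniquely
as a sum of an element of `L` and an element of `M`, and an element is positive iff
both its components are positive. -/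
def IsOrderDecomposition {E : Type*} [AddCommGroup E] [Lattice E] [Module ℝ E]
    (L M : Submodule ℝ E) : Prop :=
  (∀ x : E, ∃ y ∈ L, ∃ z ∈ M, x = y + z) ∧
  (∀ x : E, x ∈ L → x ∈ M → x = 0) ∧
  (∀ y z : E, y ∈ L → z ∈ M → (0 ≤ y + z ↔ 0 ≤ y ∧ 0 ≤ z))

/-- A homomorphism `ρ : G →* (E ≃ₗ[ℝ] E)` is a positive representation when each
`ρ s` is an order isomorphism (hence a lattice automorphism). -/
def IsPositiveRep {E : Type*} [AddCommGroup E] [Lattice E] [Module ℝ E]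
    {G : Type*} [Group G] (ρ : G →* (E ≃ₗ[ℝ] E)) : Prop :=
  ∀ (s : G) (x y : E), x ≤ y ↔ ρ s x ≤ ρ s y

/-- A submodule is `ρ`-invariant if it is mapped into itself by every `ρ s`. -/
def InvariantSubmodule {E : Type*} [AddCommGroup E] [Lattice E] [Module ℝ E]
    {G : Type*} [Group G] (ρ : G →* (E ≃ₗ[ℝ] E)) (B : Submodule ℝ E) : Prop :=
  ∀ (s : G), ∀ x ∈ B, ρ s x ∈ B

/-- `ρ` is order indecomposable if the only `ρ`-invariant order direct sum
decompositions `E = L ⊕ M` are the trivial ones. -/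
def OrderIndecomposable {E : Type*} [AddCommGroup E] [Lattice E] [Module ℝ E]
    {G : Type*} [Group G] (ρ : G →* (E ≃ₗ[ℝ] E)) : Prop :=
  ∀ L M : Submodule ℝ E, IsOrderDecomposition L M →
    InvariantSubmodule ρ L → InvariantSubmodule ρ M → L = ⊥ ∨ L = ⊤

/-- `ρ` is projection band irreducible if the only `ρ`-invariant projection bands
are `{0}` and `E`. -/
def ProjectionBandIrreducible {E : Type*} [AddCommGroup E] [Lattice E] [Module ℝ E]
    {G : Type*} [Group G] (ρ : G →* (E ≃ₗ[ℝ] E)) : Prop :=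
  ∀ B : Submodule ℝ E, IsProjectionBand B → InvariantSubmodule ρ B → B = ⊥ ∨ B = ⊤


/-- `ρ` is band irreducible if the only `ρ`-invariant bands are `{0}` and `E`. -/
def BandIrreducible {E : Type*} [AddCommGroup E] [Lattice E] [Module ℝ E]
    {G : Type*} [Group G] (ρ : G →* (E ≃ₗ[ℝ] E)) : Prop :=
  ∀ B : Submodule ℝ E, IsBand B → InvariantSubmodule ρ B → B = ⊥ ∨ B = ⊤

/-- `E` is Archimedean: if `0 ≤ n • x ≤ y` for all positive integers `n`, then `x = 0`. -/
def RieszArchimedean (E : Type*) [AddCommGroup E] [Lattice E] [Module ℝ E] : Prop :=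
  ∀ x y : E, (∀ n : ℕ, 0 < n → 0 ≤ n • x ∧ n • x ≤ y) → x = 0

/-- The lattice automorphism of `C(G/H) = (G ⧸ H → ℝ)` given by left translation
by `s`; it maps the basis vector `e_{tH}` to `e_{stH}`. -/
noncomputable def cosetShift {G : Type*} [Group G] (H : Subgroup G) (s : G) :
    (G ⧸ H → ℝ) ≃ₗ[ℝ] (G ⧸ H → ℝ) where
  toFun f := fun c => f (s⁻¹ • c)
  invFun f := fun c => f (s • c)
  map_add' _ _ := rfl
  map_smul' _ _ := rfl
  left_inv f := funext fun c => by simp [smul_smul]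
  right_inv f := funext fun c => by simp [smul_smul]

/-- The canonical positive representation `π^H` of `G` on `C(G/H)`, with
`π^H_s e_{tH} = e_{stH}`. -/
noncomputable def cosetRep (G : Type*) [Group G] (H : Subgroup G) :
    G →* ((G ⧸ H → ℝ) ≃ₗ[ℝ] (G ⧸ H → ℝ)) where
  toFun s := cosetShift H s
  map_one' := by
    apply LinearEquiv.toLinearMap_injective
    ext f c
    simp [cosetShift]
  map_mul' s t := by
    apply LinearEquiv.toLinearMap_injective
    ext f c
    simp [cosetShift, mul_smul]

universe u

/-!
Conjugacy of `H₁` and `H₂` means that `H₂` is the stabilizer of a point of `G/H₁`, and a lattice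
isomorphism sends atoms to atoms, that is, multiples of point masses to multiples of point masses;
comparing stabilizers of point masses gives (b) and (c).

For (d), let `ρ` be band irreducible and `G` finite. Every nonzero orbit has trivial disjoint
complement, since that complement is an invariant band. Two consequences make `E` an Archimedean
space with an atom. The vectors infinitely small with respect to the invariant vector `∑ ρ_s y`
form a proper invariant band, so there are none. And if `x > 0` makes `{s | ρ_s x ⊓ x ≠ 0}`
minimal, then no two nonzero vectors of `[0, x]` are disjoint, which in an Archimedean space
says that `x` is an atom. The orbit of an atom `a` consists of pairwise disjoint atoms, because
`ρ_s a = l a` with `s` of finite order forces `l = 1`. It is then a basis of `E` in which the order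
is coordinatewise, and it is permuted by `G` like the cosets of the stabilizer of `a`.
-/

/-- Order equivalence of two representations: a linear order isomorphism that intertwines them. -/
def OrderEquivalent {G E F : Type*} [Group G] [AddCommGroup E] [Lattice E] [Module ℝ E]
    [AddCommGroup F] [Lattice F] [Module ℝ F] (ρ : G →* (E ≃ₗ[ℝ] E)) (θ : G →* (F ≃ₗ[ℝ] F)) :
    Prop :=
  ∃ T : E ≃ₗ[ℝ] F, (∀ x y : E, x ≤ y ↔ T x ≤ T y) ∧ ∀ (s : G) (x : E), T (ρ s x) = θ s (T x)

/-- An atom of a Riesz space, in the strong sense: a positive vector whose order interval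
`[0, a]` consists of multiples of `a`. -/
def IsRieszAtom {E : Type*} [AddCommGroup E] [Lattice E] [Module ℝ E] (a : E) : Prop :=
  0 < a ∧ ∀ x : E, 0 ≤ x → x ≤ a → ∃ t : ℝ, x = t • a

section LatticeOrderedGroup

variable {E : Type*} [AddCommGroup E] [Lattice E]

theorem inf_eq_zero_of_le {x y a : E} (hx : 0 ≤ x) (ha : 0 ≤ a) (hxy : x ≤ y) (h : y ⊓ a = 0) :
    x ⊓ a = 0 :=
  le_antisymm (h ▸ inf_le_inf_right a hxy) (le_inf hx ha)

variable [IsOrderedAddMonoid E]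

theorem add_inf_eq_zero {x y a : E} (hx : 0 ≤ x) (hy : 0 ≤ y) (ha : 0 ≤ a) (hxa : x ⊓ a = 0)
    (hya : y ⊓ a = 0) : (x + y) ⊓ a = 0 := by
  refine le_antisymm ?_ (le_inf (add_nonneg hx hy) ha)
  have hle : (x + y) ⊓ a ≤ x := by
    rw [← sub_nonpos, ← hya]
    exact le_inf (sub_le_iff_le_add'.2 inf_le_left) ((sub_le_self _ hx).trans inf_le_right)
  exact hxa ▸ le_inf hle inf_le_right

theorem nsmul_inf_eq_zero {x a : E} (hx : 0 ≤ x) (ha : 0 ≤ a) (h : x ⊓ a = 0) (n : ℕ) :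
    (n • x) ⊓ a = 0 := by
  induction n with
  | zero => simpa using ha
  | succ n ih => rw [succ_nsmul]; exact add_inf_eq_zero (nsmul_nonneg hx n) hx ha ih h

theorem sum_inf_eq_zero {ι : Type*} {x : ι → E} {a : E} {s : Finset ι}
    (hx : ∀ i ∈ s, 0 ≤ x i) (ha : 0 ≤ a) (h : ∀ i ∈ s, x i ⊓ a = 0) : (∑ i ∈ s, x i) ⊓ a = 0 := by
  classical
  induction s using Finset.induction_on with
  | empty => simpa using ha
  | insert i s hi ih =>
    rw [Finset.forall_mem_insert] at hx h
    rw [Finset.sum_insert hi]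
    exact add_inf_eq_zero hx.1 (Finset.sum_nonneg hx.2) ha h.1 (ih hx.2 h.2)

theorem sum_le_of_pairwise_inf_eq_zero {ι : Type*} {x : ι → E} {u : E} (hx : ∀ i, 0 ≤ x i)
    (hdisj : Pairwise fun i j => x i ⊓ x j = 0) (hu : 0 ≤ u) (h : ∀ i, x i ≤ u) (s : Finset ι) :
    ∑ i ∈ s, x i ≤ u := by
  classical
  induction s using Finset.induction_on with
  | empty => simpa using hu
  | insert i s hi ih =>
    have hinf : (∑ j ∈ s, x j) ⊓ x i = 0 :=
      sum_inf_eq_zero (fun j _ => hx j) (hx i) fun j hj => hdisj (ne_of_mem_of_not_mem hj hi)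
    rw [Finset.sum_insert hi, ← inf_add_sup, inf_comm, hinf, zero_add]
    exact sup_le (h i) ih

theorem exists_pos_of_nontrivial [Nontrivial E] : ∃ x : E, 0 < x := by
  obtain ⟨x, hx⟩ := exists_ne (0 : E)
  by_contra! hpos
  have hzero : ∀ y : E, 0 ≤ y → y = 0 := fun y hy => by_contra fun hne =>
    hpos y (hy.lt_of_ne' hne)
  apply hx
  rw [← posPart_sub_negPart x, hzero _ (posPart_nonneg x), hzero _ (negPart_nonneg x), sub_zero]

end LatticeOrderedGroup

section OrderedModule

variable {E : Type*} [AddCommGroup E] [Lattice E] [Module ℝ E] [IsOrderedModule ℝ E]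

theorem abs_smul_le_abs_smul_abs (c : ℝ) (x : E) : |c • x| ≤ |c| • |x| := by
  have hle : ∀ z : E, |z| = |x| → c • z ≤ |c| • |x| := by
    intro z hz
    rcases le_total 0 c with hc | hc
    · rw [abs_of_nonneg hc, ← hz]
      exact smul_le_smul_of_nonneg_left (le_abs_self z) hc
    · rw [abs_of_nonpos hc, ← hz, ← neg_smul_neg]
      exact smul_le_smul_of_nonneg_left (neg_le_abs z) (neg_nonneg.2 hc)
  exact abs_le'.2 ⟨hle x rfl, smul_neg c x ▸ hle (-x) (abs_neg x)⟩

variable [IsOrderedAddMonoid E]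

theorem smul_inf_eq_zero {x a : E} (hx : 0 ≤ x) (ha : 0 ≤ a) (h : x ⊓ a = 0) {c : ℝ}
    (hc : 0 ≤ c) : (c • x) ⊓ a = 0 := by
  obtain ⟨n, hn⟩ := exists_nat_ge c
  refine inf_eq_zero_of_le (smul_nonneg hc hx) ha ?_ (nsmul_inf_eq_zero hx ha h n)
  rw [← Nat.cast_smul_eq_nsmul ℝ]
  exact smul_le_smul_of_nonneg_right hn hx

theorem RieszArchimedean.le_of_forall_pos_le_add_smul (hE : RieszArchimedean E) {x y z : E}
    (hz : 0 ≤ z) (h : ∀ t : ℝ, 0 < t → x ≤ y + t • z) : x ≤ y := by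
  rw [← sub_nonpos, ← posPart_eq_zero]
  refine hE _ z fun n hn => ⟨nsmul_nonneg (posPart_nonneg _) n, ?_⟩
  have hn' : (0 : ℝ) < n := Nat.cast_pos.2 hn
  have hle : (x - y)⁺ ≤ (n : ℝ)⁻¹ • z :=
    sup_le (sub_le_iff_le_add'.2 (h _ (inv_pos.2 hn'))) (smul_nonneg (inv_pos.2 hn').le hz)
  calc n • (x - y)⁺ = (n : ℝ) • (x - y)⁺ := (Nat.cast_smul_eq_nsmul ℝ n _).symm
    _ ≤ (n : ℝ) • (n : ℝ)⁻¹ • z := smul_le_smul_of_nonneg_left hle hn'.le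
    _ = z := smul_inv_smul₀ hn'.ne' z

theorem RieszArchimedean.exists_isGreatest_smul_le (hE : RieszArchimedean E) {a u : E}
    (ha : 0 < a) (hu : 0 ≤ u) : ∃ l : ℝ, IsGreatest {t : ℝ | t • a ≤ u} l := by
  have hne : {t : ℝ | t • a ≤ u}.Nonempty := ⟨0, by simpa using hu⟩
  have hbdd : BddAbove {t : ℝ | t • a ≤ u} := by
    by_contra hunbdd
    refine ha.ne' (hE a u fun n _ => ⟨nsmul_nonneg ha.le n, ?_⟩)
    obtain ⟨t, ht, hnt⟩ := not_bddAbove_iff.1 hunbdd n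
    rw [← Nat.cast_smul_eq_nsmul ℝ]
    exact (smul_le_smul_of_nonneg_right hnt.le ha.le).trans ht
  refine ⟨_, hE.le_of_forall_pos_le_add_smul ha.le fun t ht => ?_, fun _ => le_csSup hbdd⟩
  obtain ⟨r, hr, hlt⟩ := exists_lt_of_lt_csSup hne (sub_lt_self _ ht)
  calc sSup {t : ℝ | t • a ≤ u} • a ≤ (r + t) • a :=
        smul_le_smul_of_nonneg_right (sub_lt_iff_lt_add.1 hlt).le ha.le
    _ = r • a + t • a := add_smul r t a
    _ ≤ u + t • a := add_le_add_left hr _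

end OrderedModule

section Bands

variable {E : Type*} [AddCommGroup E] [Lattice E] [IsOrderedAddMonoid E] [Module ℝ E]

theorem IsRieszIdeal.mem_of_nonneg_of_le {I : Submodule ℝ E} (hI : IsRieszIdeal I) {x y : E}
    (hx : 0 ≤ x) (hxy : x ≤ y) (hy : y ∈ I) : x ∈ I :=
  hI x y (by rwa [abs_of_nonneg hx, abs_of_nonneg (hx.trans hxy)]) hy

theorem IsRieszIdeal.posPart_mem {I : Submodule ℝ E} (hI : IsRieszIdeal I) {x : E} (hx : x ∈ I) :
    x⁺ ∈ I := by
  refine hI _ x ?_ hx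
  rw [abs_of_nonneg (posPart_nonneg x), ← posPart_add_negPart]
  exact le_add_of_nonneg_right (negPart_nonneg x)

theorem IsRieszIdeal.negPart_mem {I : Submodule ℝ E} (hI : IsRieszIdeal I) {x : E} (hx : x ∈ I) :
    x⁻ ∈ I := by
  rw [← posPart_neg]
  exact hI.posPart_mem (I.neg_mem hx)

theorem IsRieszIdeal.isBand {I : Submodule ℝ E} (hI : IsRieszIdeal I)
    (hsup : ∀ (D : Set E) (x : E), (∀ d ∈ D, d ∈ I ∧ 0 ≤ d) → 0 ≤ x → IsLUB D x → x ∈ I) :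
    IsBand I := by
  refine ⟨hI, fun D x hD hx => ?_⟩
  have hpos : x⁺ ∈ I := by
    refine hsup (insert 0 ((·⁺) '' D)) x⁺ ?_ (posPart_nonneg x) ⟨?_, fun y hy => ?_⟩
    · rintro _ (rfl | ⟨d, hd, rfl⟩)
      · exact ⟨I.zero_mem, le_rfl⟩
      · exact ⟨hI.posPart_mem (hD hd), posPart_nonneg d⟩
    · rintro _ (rfl | ⟨d, hd, rfl⟩)
      · exact posPart_nonneg x
      · exact posPart_mono (hx.1 hd)
    · exact sup_le (hx.2 fun d hd => (le_posPart d).trans (hy (.inr ⟨d, hd, rfl⟩)))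
        (hy (.inl rfl))
  have hneg : x⁻ ∈ I := by
    rcases D.eq_empty_or_nonempty with rfl | ⟨d, hd⟩
    · have hx0 : 0 ≤ x := by
        rw [← le_add_iff_nonneg_left x]
        exact hx.2 fun d hd => hd.elim
      rw [negPart_eq_zero.2 hx0]
      exact I.zero_mem
    · exact hI.mem_of_nonneg_of_le (negPart_nonneg x) (negPart_anti (hx.1 hd))
        (hI.negPart_mem (hD hd))
  rw [← posPart_sub_negPart x]
  exact I.sub_mem hpos hneg

variable [IsOrderedModule ℝ E]

/-- The disjoint complement of an arbitrary set, as a subspace. -/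
def disjComplementSubmodule (D : Set E) : Submodule ℝ E where
  carrier := disjComplement D
  zero_mem' y _ := by simp
  add_mem' {x y} hx hy a ha := inf_eq_zero_of_le (abs_nonneg _) (abs_nonneg a) (abs_add_le x y)
    (add_inf_eq_zero (abs_nonneg x) (abs_nonneg y) (abs_nonneg a) (hx a ha) (hy a ha))
  smul_mem' c x hx a ha := inf_eq_zero_of_le (abs_nonneg _) (abs_nonneg a)
    (abs_smul_le_abs_smul_abs c x)
    (smul_inf_eq_zero (abs_nonneg x) (abs_nonneg a) (hx a ha) (abs_nonneg c))

theorem isBand_disjComplementSubmodule (D : Set E) : IsBand (disjComplementSubmodule D) := by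
  have hideal : IsRieszIdeal (disjComplementSubmodule D) := fun x y hxy hy a ha =>
    inf_eq_zero_of_le (abs_nonneg x) (abs_nonneg a) hxy (hy a ha)
  refine hideal.isBand fun S x hS hx hlub a ha => ?_
  rw [abs_of_nonneg hx]
  have hinf : 0 ≤ x ⊓ |a| := le_inf hx (abs_nonneg a)
  -- `x - x ⊓ |a|` is still an upper bound of `S`, because each `d ∈ S` is disjoint from `x ⊓ |a|`.
  refine le_antisymm ((le_sub_self_iff x).1 (hlub.2 fun d hd => ?_)) hinf
  obtain ⟨hda, hd0⟩ := hS d hd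
  have hdisj : x ⊓ |a| ⊓ d = 0 := by
    refine inf_eq_zero_of_le hinf hd0 inf_le_right ?_
    rw [inf_comm, ← abs_of_nonneg hd0]
    exact hda a ha
  rw [le_sub_iff_add_le', ← inf_add_sup, hdisj, zero_add]
  exact sup_le inf_le_left (hlub.1 hd)

/-- The vectors that are infinitely small with respect to `e`. -/
def infinitesimalSubmodule (e : E) : Submodule ℝ E where
  carrier := {x | ∀ t : ℝ, 0 < t → |x| ≤ t • |e|}
  zero_mem' t ht := by simpa using smul_nonneg ht.le (abs_nonneg e)
  add_mem' {x y} hx hy t ht :=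
    calc |x + y| ≤ |x| + |y| := abs_add_le x y
      _ ≤ (t / 2) • |e| + (t / 2) • |e| := add_le_add (hx _ (half_pos ht)) (hy _ (half_pos ht))
      _ = t • |e| := by rw [← add_smul, add_halves]
  smul_mem' c x hx t ht := by
    have hc : 0 < |c| + 1 := by positivity
    calc |c • x| ≤ |c| • |x| := abs_smul_le_abs_smul_abs c x
      _ ≤ (|c| + 1) • |x| := smul_le_smul_of_nonneg_right (by linarith) (abs_nonneg x)
      _ ≤ (|c| + 1) • (t / (|c| + 1)) • |e| :=
        smul_le_smul_of_nonneg_left (hx _ (div_pos ht hc)) hc.le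
      _ = t • |e| := by rw [smul_smul, mul_div_cancel₀ t hc.ne']

theorem isBand_infinitesimalSubmodule (e : E) : IsBand (infinitesimalSubmodule e) := by
  have hideal : IsRieszIdeal (infinitesimalSubmodule e) := fun x y hxy hy t ht =>
    hxy.trans (hy t ht)
  refine hideal.isBand fun S x hS hx hlub t ht => ?_
  rw [abs_of_nonneg hx]
  exact hlub.2 fun d hd => (le_abs_self d).trans ((hS d hd).1 t ht)

theorem mem_infinitesimalSubmodule_self_iff {e : E} : e ∈ infinitesimalSubmodule e ↔ e = 0 := by
  refine ⟨fun he => ?_, fun he => by rw [he]; exact Submodule.zero_mem _⟩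
  have hhalf : (2⁻¹ : ℝ) • |e| ≤ 0 := by
    have h := he 2⁻¹ (by norm_num)
    nth_rewrite 1 [← one_smul ℝ |e|] at h
    rw [← sub_nonpos, ← sub_smul] at h
    norm_num at h
    simpa using h
  have habs : |e| ≤ 0 := by
    simpa using smul_le_smul_of_nonneg_left hhalf (zero_le_two (α := ℝ))
  exact le_antisymm ((le_abs_self e).trans habs) (neg_nonpos.1 ((neg_le_abs e).trans habs))

end Bands

section LatticeIsomorphism

variable {E F : Type*} [AddCommGroup E] [Lattice E] [Module ℝ E] [AddCommGroup F] [Lattice F]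
  [Module ℝ F] {T : E ≃ₗ[ℝ] F}

theorem map_nonneg_iff_of_le_iff (hT : ∀ x y, x ≤ y ↔ T x ≤ T y) {x : E} : 0 ≤ T x ↔ 0 ≤ x := by
  rw [hT, map_zero]

theorem map_inf_of_le_iff (hT : ∀ x y, x ≤ y ↔ T x ≤ T y) (x y : E) :
    T (x ⊓ y) = T x ⊓ T y :=
  OrderIso.map_inf ⟨T.toEquiv, (hT _ _).symm⟩ x y

theorem map_abs_of_le_iff (hT : ∀ x y, x ≤ y ↔ T x ≤ T y) (x : E) : T |x| = |T x| :=
  (OrderIso.map_sup ⟨T.toEquiv, (hT _ _).symm⟩ x (-x)).trans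
    (congrArg (T x ⊔ ·) (map_neg T x))

theorem IsRieszAtom.map_of_le_iff (hT : ∀ x y, x ≤ y ↔ T x ≤ T y) {a : E} (ha : IsRieszAtom a) :
    IsRieszAtom (T a) := by
  refine ⟨((map_nonneg_iff_of_le_iff hT).2 ha.1.le).lt_of_ne' (T.map_ne_zero_iff.2 ha.1.ne'),
    fun y hy hya => ?_⟩
  obtain ⟨x, rfl⟩ := T.surjective y
  obtain ⟨t, rfl⟩ := ha.2 x ((map_nonneg_iff_of_le_iff hT).1 hy) ((hT _ _).2 hya)
  exact ⟨t, map_smul T t a⟩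

end LatticeIsomorphism

section Atoms

variable {E : Type*} [AddCommGroup E] [Lattice E] [Module ℝ E]

theorem IsRieszAtom.exists_eq_smul_of_inf_ne_zero {a b : E} (ha : IsRieszAtom a)
    (hb : IsRieszAtom b) (h : a ⊓ b ≠ 0) : ∃ t : ℝ, b = t • a := by
  have hinf : 0 ≤ a ⊓ b := le_inf ha.1.le hb.1.le
  obtain ⟨t, ht⟩ := ha.2 _ hinf inf_le_left
  obtain ⟨r, hr⟩ := hb.2 _ hinf inf_le_right
  have hr0 : r ≠ 0 := by
    rintro rfl
    exact h (by rw [hr, zero_smul])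
  exact ⟨r⁻¹ * t, by rw [mul_smul, ← ht, hr, inv_smul_smul₀ hr0]⟩

variable [IsOrderedAddMonoid E] [IsOrderedModule ℝ E]

theorem RieszArchimedean.isRieszAtom (hE : RieszArchimedean E) {a : E} (ha : 0 < a)
    (h : ∀ u v : E, 0 < u → u ≤ a → 0 < v → v ≤ a → u ⊓ v ≠ 0) : IsRieszAtom a := by
  refine ⟨ha, fun x hx hxa => ?_⟩
  obtain ⟨l, hl, hmax⟩ := hE.exists_isGreatest_smul_le ha hx
  have hl0 : 0 ≤ l := hmax (by simpa using hx)
  refine ⟨l, le_antisymm (hE.le_of_forall_pos_le_add_smul ha.le fun t ht => ?_) hl⟩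
  rw [← add_smul]
  rcases le_total 1 (l + t) with hlt | hlt
  · exact hxa.trans (by simpa using smul_le_smul_of_nonneg_right hlt ha.le)
  -- The two parts of `z` are disjoint and lie in `[0, a]`; the negative one is not zero since
  -- `l` is maximal, so the positive one is.
  set z : E := x - (l + t) • a with hz
  have hneg : z⁻ ≠ 0 := fun hzero =>
    (lt_add_of_pos_right l ht).not_ge (hmax (sub_nonneg.1 (negPart_eq_zero.1 hzero)))
  have hneg_le : z⁻ ≤ a := by
    refine sup_le ?_ ha.le
    calc -z ≤ (l + t) • a := by rw [hz, neg_sub]; exact sub_le_self _ hx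
      _ ≤ a := by simpa using smul_le_smul_of_nonneg_right hlt ha.le
  have hpos_le : z⁺ ≤ a :=
    sup_le ((sub_le_self x (smul_nonneg (by positivity) ha.le)).trans hxa) ha.le
  have hpos : z⁺ = 0 := by
    by_contra hne
    exact h _ _ ((posPart_nonneg z).lt_of_ne' hne) hpos_le
      ((negPart_nonneg z).lt_of_ne' hneg) hneg_le (posPart_inf_negPart_eq_zero z)
  exact sub_nonpos.1 (posPart_eq_zero.1 hpos)

variable {ι : Type*} {A : ι → E}

theorem nonneg_of_sum_smul_nonneg [Fintype ι] (hpos : ∀ i, 0 < A i)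
    (hdisj : Pairwise fun i j => A i ⊓ A j = 0) {f : ι → ℝ} (h : 0 ≤ ∑ i, f i • A i) :
    0 ≤ f := by
  classical
  intro i
  by_contra hneg
  have hi : f i < 0 := not_le.1 hneg
  have hi' : 0 ≤ (-f i) • A i := smul_nonneg (neg_nonneg.2 hi.le) (hpos i).le
  set M := disjComplementSubmodule {A i}
  have hrest : ∑ j ∈ Finset.univ.erase i, f j • A j ∈ M := by
    refine M.sum_mem fun j hj => M.smul_mem _ ?_
    rintro _ rfl
    rw [abs_of_nonneg (hpos j).le, abs_of_nonneg (hpos i).le]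
    exact hdisj (Finset.ne_of_mem_erase hj)
  have hle : (-f i) • A i ≤ ∑ j ∈ Finset.univ.erase i, f j • A j := by
    rwa [neg_smul, neg_le_iff_add_nonneg',
      Finset.add_sum_erase _ (fun j => f j • A j) (Finset.mem_univ i)]
  have hmem : A i ∈ M := (M.smul_mem_iff (neg_ne_zero.2 hi.ne)).1
    ((isBand_disjComplementSubmodule _).1.mem_of_nonneg_of_le hi' hle hrest)
  have hself := hmem (A i) rfl
  rw [inf_idem, abs_of_nonneg (hpos i).le] at hself
  exact (hpos i).ne' hself

theorem linearIndependent_of_pairwise_inf_eq_zero [Finite ι] (hpos : ∀ i, 0 < A i)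
    (hdisj : Pairwise fun i j => A i ⊓ A j = 0) : LinearIndependent ℝ A := by
  cases nonempty_fintype ι
  rw [Fintype.linearIndependent_iff]
  intro f hf i
  have hneg : 0 ≤ -f := nonneg_of_sum_smul_nonneg hpos hdisj (by simp [hf])
  exact le_antisymm (neg_nonneg.1 (hneg i)) (nonneg_of_sum_smul_nonneg hpos hdisj hf.ge i)

theorem RieszArchimedean.span_range_eq_top_of_isRieszAtom [Finite ι]
    (hE : RieszArchimedean E) (hatom : ∀ i, IsRieszAtom (A i))
    (hdisj : Pairwise fun i j => A i ⊓ A j = 0)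
    (hbot : disjComplementSubmodule (Set.range A) = ⊥) :
    Submodule.span ℝ (Set.range A) = ⊤ := by
  cases nonempty_fintype ι
  have hpos : ∀ i, 0 ≤ A i := fun i => (hatom i).1.le
  suffices hmem : ∀ u : E, 0 ≤ u → u ∈ Submodule.span ℝ (Set.range A) by
    refine eq_top_iff.2 fun x _ => ?_
    rw [← posPart_sub_negPart x]
    exact Submodule.sub_mem _ (hmem _ (posPart_nonneg x)) (hmem _ (negPart_nonneg x))
  intro u hu
  choose l hl hmax using fun i => hE.exists_isGreatest_smul_le (hatom i).1 hu
  have hl0 : ∀ i, 0 ≤ l i := fun i => hmax i (by simpa using hu)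
  have hterm : ∀ i, 0 ≤ l i • A i := fun i => smul_nonneg (hl0 i) (hpos i)
  have hsum : 0 ≤ u - ∑ i, l i • A i := by
    refine sub_nonneg.2 (sum_le_of_pairwise_inf_eq_zero hterm (fun i j hij => ?_) hu hl _)
    refine smul_inf_eq_zero (hpos i) (hterm j) ?_ (hl0 i)
    rw [inf_comm]
    exact smul_inf_eq_zero (hpos j) (hpos i) (hdisj hij.symm) (hl0 j)
  have hrem : u - ∑ i, l i • A i ∈ disjComplementSubmodule (Set.range A) := by
    rintro _ ⟨i, rfl⟩
    rw [abs_of_nonneg hsum, abs_of_nonneg (hpos i)]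
    have hinf : 0 ≤ (u - ∑ j, l j • A j) ⊓ A i := le_inf hsum (hpos i)
    obtain ⟨t, ht⟩ := (hatom i).2 _ hinf inf_le_right
    have hle : t • A i ≤ u - l i • A i :=
      ht ▸ inf_le_left.trans (sub_le_sub_left
        (Finset.single_le_sum (fun j _ => hterm j) (Finset.mem_univ i)) u)
    have ht0 : t ≤ 0 := by
      have hadd : (t + l i) • A i ≤ u := add_smul t (l i) (A i) ▸ le_sub_iff_add_le.1 hle
      linarith [hmax i hadd]
    exact le_antisymm (ht ▸ smul_nonpos_of_nonpos_of_nonneg ht0 (hpos i)) hinf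
  rw [hbot, Submodule.mem_bot, sub_eq_zero] at hrem
  rw [hrem]
  exact Submodule.sum_mem _ fun i _ => Submodule.smul_mem _ _ (Submodule.subset_span ⟨i, rfl⟩)

end Atoms

section FunctionSpace

variable {ι : Type*} [DecidableEq ι]

theorem isRieszAtom_single (i : ι) : IsRieszAtom (Pi.single i 1 : ι → ℝ) := by
  refine ⟨Pi.single_pos.2 one_pos, fun x hx hxi => ⟨x i, funext fun j => ?_⟩⟩
  rcases eq_or_ne j i with rfl | hji
  · simp
  · have hle := hxi j
    rw [Pi.single_eq_of_ne hji] at hle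
    simpa [Pi.single_eq_of_ne hji] using le_antisymm hle (hx j)

theorem IsRieszAtom.exists_eq_single {a : ι → ℝ} (ha : IsRieszAtom a) :
    ∃ i, a i ≠ 0 ∧ a = Pi.single i (a i) := by
  obtain ⟨i, hi⟩ := Function.ne_iff.1 ha.1.ne'
  refine ⟨i, hi, ?_⟩
  have hle : Pi.single i (a i) ≤ a := by
    intro j
    rcases eq_or_ne j i with rfl | hji
    · simp
    · simpa [hji] using ha.1.le j
  obtain ⟨t, ht⟩ := ha.2 _ (Pi.single_nonneg.2 (ha.1.le i)) hle
  have ht1 : t = 1 := (mul_eq_right₀ hi).1 (by simpa using (congrFun ht i).symm)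
  rw [ht, ht1, one_smul]

theorem IsRieszIdeal.single_mem {I : Submodule ℝ (ι → ℝ)} (hI : IsRieszIdeal I) {f : ι → ℝ}
    (hf : f ∈ I) {i : ι} (hi : f i ≠ 0) : Pi.single i 1 ∈ I := by
  refine hI _ ((f i)⁻¹ • f) (fun j => ?_) (I.smul_mem _ hf)
  rcases eq_or_ne j i with rfl | hji
  · simp [hi]
  · simpa [hji] using (by positivity : 0 ≤ |f i|⁻¹ * |f j|)

theorem isLUB_range_single {f : ι → ℝ} (hf : 0 ≤ f) :
    IsLUB (Set.range fun i => Pi.single i (f i)) f := by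
  constructor
  · rintro _ ⟨i, rfl⟩ j
    rcases eq_or_ne j i with rfl | hji
    · simp
    · simpa [hji] using hf j
  · intro g hg i
    simpa using hg ⟨i, rfl⟩ i

theorem IsBand.eq_top_of_forall_single_mem {B : Submodule ℝ (ι → ℝ)} (hB : IsBand B)
    (h : ∀ i, Pi.single i 1 ∈ B) : B = ⊤ := by
  have hmem : ∀ f : ι → ℝ, 0 ≤ f → f ∈ B := by
    refine fun f hf => hB.2 _ f ?_ (isLUB_range_single hf)
    rintro _ ⟨i, rfl⟩
    simpa [← Pi.single_smul] using B.smul_mem (f i) (h i)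
  refine eq_top_iff.2 fun f _ => ?_
  rw [← posPart_sub_negPart f]
  exact B.sub_mem (hmem _ (posPart_nonneg f)) (hmem _ (negPart_nonneg f))

end FunctionSpace

section CosetRepresentation

variable {G : Type*} [Group G]

theorem cosetRep_apply (H : Subgroup G) (s : G) (f : G ⧸ H → ℝ) (c : G ⧸ H) :
    cosetRep G H s f c = f (s⁻¹ • c) := rfl

open Classical in
theorem cosetRep_single (H : Subgroup G) (s : G) (c : G ⧸ H) (r : ℝ) :
    cosetRep G H s (Pi.single c r) = Pi.single (s • c) r := by
  funext d
  simp only [cosetRep_apply, Pi.single_apply, inv_smul_eq_iff]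

theorem bandIrreducible_cosetRep (H : Subgroup G) : BandIrreducible (cosetRep G H) := by
  classical
  refine fun B hB hinv => or_iff_not_imp_left.2 fun hne => ?_
  obtain ⟨f, hf, hf0⟩ := B.ne_bot_iff.1 hne
  obtain ⟨c, hc⟩ := Function.ne_iff.1 hf0
  refine hB.eq_top_of_forall_single_mem fun d => ?_
  obtain ⟨s, rfl⟩ := MulAction.exists_smul_eq G c d
  rw [← cosetRep_single]
  exact hinv s _ (hB.1.single_mem hf hc)

theorem orderEquivalent_cosetRep_of_equiv {H₁ H₂ : Subgroup G} (φ : G ⧸ H₂ ≃ G ⧸ H₁)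
    (hφ : ∀ (s : G) (c : G ⧸ H₂), φ (s • c) = s • φ c) :
    OrderEquivalent (cosetRep G H₁) (cosetRep G H₂) := by
  refine ⟨LinearEquiv.funCongrLeft ℝ ℝ φ, fun x y => ?_, fun s f => funext fun c => ?_⟩
  · exact φ.surjective.forall
  · exact congrArg f (hφ s⁻¹ c).symm

theorem smul_mk_eq_mk_iff (H : Subgroup G) (g r : G) :
    g • (r : G ⧸ H) = r ↔ r⁻¹ * g * r ∈ H := by
  rw [eq_comm, MulAction.Quotient.smul_coe, QuotientGroup.eq, smul_eq_mul, mul_assoc]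

theorem orderEquivalent_cosetRep_of_conj {H₁ H₂ : Subgroup G} {r : G}
    (h : ∀ g : G, g ∈ H₂ ↔ r * g * r⁻¹ ∈ H₁) :
    OrderEquivalent (cosetRep G H₁) (cosetRep G H₂) := by
  set x : G ⧸ H₁ := ((r⁻¹ : G) : G ⧸ H₁) with hx
  obtain rfl : MulAction.stabilizer G x = H₂ := by
    ext g
    rw [MulAction.mem_stabilizer_iff, hx, smul_mk_eq_mk_iff, inv_inv, h]
  have hsurj : Function.Surjective (MulAction.ofQuotientStabilizer G x) := fun c =>
    (MulAction.exists_smul_eq G x c).imp' QuotientGroup.mk fun _ hg => hg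
  exact orderEquivalent_cosetRep_of_equiv
    (Equiv.ofBijective _ ⟨MulAction.injective_ofQuotientStabilizer G x, hsurj⟩)
    (MulAction.ofQuotientStabilizer_smul G x)

open Classical in
theorem cosetRep_single_eq_self_iff {H : Subgroup G} {s : G} {c : G ⧸ H} {r : ℝ} (hr : r ≠ 0) :
    cosetRep G H s (Pi.single c r) = Pi.single c r ↔ s • c = c := by
  rw [cosetRep_single]
  exact ⟨fun h => by simpa [Pi.single_apply, hr] using congrFun h (s • c), fun h => by rw [h]⟩

theorem OrderEquivalent.exists_stabilizer_eq {H₁ H₂ : Subgroup G}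
    (h : OrderEquivalent (cosetRep G H₁) (cosetRep G H₂)) (c : G ⧸ H₁) :
    ∃ d : G ⧸ H₂, MulAction.stabilizer G d = MulAction.stabilizer G c := by
  classical
  obtain ⟨T, hT, hequiv⟩ := h
  obtain ⟨d, hd, hTd⟩ := ((isRieszAtom_single c).map_of_le_iff hT).exists_eq_single
  refine ⟨d, Subgroup.ext fun s => ?_⟩
  rw [MulAction.mem_stabilizer_iff, MulAction.mem_stabilizer_iff,
    ← cosetRep_single_eq_self_iff hd, ← hTd, ← hequiv, T.injective.eq_iff,
    cosetRep_single_eq_self_iff one_ne_zero]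

theorem OrderEquivalent.exists_conj {H₁ H₂ : Subgroup G}
    (h : OrderEquivalent (cosetRep G H₁) (cosetRep G H₂)) :
    ∃ r : G, ∀ g : G, g ∈ H₂ ↔ r * g * r⁻¹ ∈ H₁ := by
  obtain ⟨d, hd⟩ := h.exists_stabilizer_eq ((1 : G) : G ⧸ H₁)
  obtain ⟨r, rfl⟩ := QuotientGroup.mk_surjective d
  refine ⟨r, fun g => ?_⟩
  have hstab := SetLike.ext_iff.1 hd (r * g * r⁻¹)
  rw [MulAction.mem_stabilizer_iff, MulAction.mem_stabilizer_iff, smul_mk_eq_mk_iff,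
    smul_mk_eq_mk_iff] at hstab
  simpa [mul_assoc] using hstab

end CosetRepresentation

section PositiveRepresentation

variable {G E : Type*} [Group G] [AddCommGroup E] [Lattice E] [IsOrderedAddMonoid E] [Module ℝ E]
  [IsOrderedModule ℝ E] {ρ : G →* (E ≃ₗ[ℝ] E)}

theorem IsPositiveRep.invariantSubmodule_disjComplementSubmodule (hρ : IsPositiveRep ρ)
    {D : Set E} (hD : ∀ s : G, ∀ a ∈ D, ρ s a ∈ D) :
    InvariantSubmodule ρ (disjComplementSubmodule D) := by
  intro s x hx a ha
  have hdisj := congrArg (ρ s) (hx _ (hD s⁻¹ a ha))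
  have hcancel : ρ s (ρ s⁻¹ a) = a := by
    rw [← LinearEquiv.mul_apply, ← map_mul, mul_inv_cancel, map_one, LinearEquiv.coe_one, id_eq]
  rwa [map_inf_of_le_iff (hρ s), map_abs_of_le_iff (hρ s), map_abs_of_le_iff (hρ s), hcancel,
    map_zero] at hdisj

theorem IsPositiveRep.invariantSubmodule_infinitesimalSubmodule (hρ : IsPositiveRep ρ)
    {e : E} (he : ∀ s : G, ρ s e = e) : InvariantSubmodule ρ (infinitesimalSubmodule e) := by
  intro s x hx t ht
  rw [← map_abs_of_le_iff (hρ s), ← he s, ← map_abs_of_le_iff (hρ s), ← map_smul, ← hρ s]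
  exact hx t ht

theorem BandIrreducible.disjComplementSubmodule_orbit_eq_bot (hirr : BandIrreducible ρ)
    (hρ : IsPositiveRep ρ) {u : E} (hu : 0 < u) :
    disjComplementSubmodule (Set.range fun s => ρ s u) = ⊥ := by
  refine (hirr _ (isBand_disjComplementSubmodule _)
    (hρ.invariantSubmodule_disjComplementSubmodule ?_)).resolve_right fun htop => hu.ne' ?_
  · rintro s _ ⟨t, rfl⟩
    exact ⟨s * t, LinearEquiv.congr_fun (map_mul ρ s t) u⟩
  · have hmem : u ∈ disjComplementSubmodule (Set.range fun s => ρ s u) := by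
      rw [htop]
      exact Submodule.mem_top
    have hself : |u| ⊓ |u| = 0 := hmem u ⟨1, by simp⟩
    rwa [inf_idem, abs_of_nonneg hu.le] at hself

theorem BandIrreducible.exists_map_inf_ne_zero (hirr : BandIrreducible ρ) (hρ : IsPositiveRep ρ)
    {u v : E} (hu : 0 < u) (hv : 0 < v) : ∃ s : G, ρ s u ⊓ v ≠ 0 := by
  by_contra! hdisj
  have hmem : v ∈ disjComplementSubmodule (Set.range fun s => ρ s u) := by
    rintro _ ⟨s, rfl⟩
    rw [abs_of_nonneg hv.le, abs_of_nonneg ((map_nonneg_iff_of_le_iff (hρ s)).2 hu.le), inf_comm]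
    exact hdisj s
  rw [hirr.disjComplementSubmodule_orbit_eq_bot hρ hu, Submodule.mem_bot] at hmem
  exact hv.ne' hmem

theorem BandIrreducible.rieszArchimedean [Finite G] (hirr : BandIrreducible ρ)
    (hρ : IsPositiveRep ρ) : RieszArchimedean E := by
  cases nonempty_fintype G
  intro x y hxy
  have hx : 0 ≤ x := by simpa using (hxy 1 one_pos).1
  have hxy1 : x ≤ y := by simpa using (hxy 1 one_pos).2
  have horbit : ∀ s : G, 0 ≤ ρ s y := fun s =>
    (map_nonneg_iff_of_le_iff (hρ s)).2 (hx.trans hxy1)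
  set e : E := ∑ s : G, ρ s y with he
  have hye : y ≤ e := by
    simpa using Finset.single_le_sum (fun s _ => horbit s) (Finset.mem_univ (1 : G))
  have hinv : ∀ s : G, ρ s e = e := fun s => by
    rw [he, map_sum]
    exact Fintype.sum_equiv (Equiv.mulLeft s) _ _ fun t => by simp
  rcases hirr _ (isBand_infinitesimalSubmodule e)
    (hρ.invariantSubmodule_infinitesimalSubmodule hinv) with hbot | htop
  · rw [← Submodule.mem_bot ℝ, ← hbot]
    intro t ht
    obtain ⟨n, hn⟩ := exists_nat_gt t⁻¹
    have hn0 : (0 : ℝ) < n := (inv_pos.2 ht).trans hn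
    rw [abs_of_nonneg hx]
    calc x = t • t⁻¹ • x := (smul_inv_smul₀ ht.ne' x).symm
      _ ≤ t • (n : ℝ) • x := smul_le_smul_of_nonneg_left
        (smul_le_smul_of_nonneg_right hn.le hx) ht.le
      _ ≤ t • |e| := by
        rw [Nat.cast_smul_eq_nsmul]
        exact smul_le_smul_of_nonneg_left
          ((hxy n (Nat.cast_pos.1 hn0)).2.trans (hye.trans (le_abs_self e))) ht.le
  · have he0 : e = 0 := mem_infinitesimalSubmodule_self_iff.1 (htop ▸ Submodule.mem_top)
    exact le_antisymm (hxy1.trans (he0 ▸ hye)) hx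

theorem BandIrreducible.exists_isRieszAtom [Finite G] [Nontrivial E] (hirr : BandIrreducible ρ)
    (hρ : IsPositiveRep ρ) : ∃ a : E, IsRieszAtom a := by
  obtain ⟨x, hx, hmin⟩ := exists_minimalFor_of_wellFoundedLT (fun x : E => 0 < x)
    (fun x => {s : G | ρ s x ⊓ x ≠ 0}) exists_pos_of_nontrivial
  refine ⟨x, (hirr.rieszArchimedean hρ).isRieszAtom hx fun u v hu hux hv hvx huv => ?_⟩
  -- Some `w ∈ (0, u]` has a translate `ρ s w ∈ (0, v]`. Then `s` separates `w` from its translate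
  -- but not `x`, against the minimality of `x`.
  obtain ⟨s, hs⟩ := hirr.exists_map_inf_ne_zero hρ hu hv
  obtain ⟨w, hw⟩ := (ρ s).surjective (ρ s u ⊓ v)
  have hsw : 0 < ρ s w := by
    rw [hw]
    exact (le_inf ((map_nonneg_iff_of_le_iff (hρ s)).2 hu.le) hv.le).lt_of_ne' hs
  have hw0 : 0 < w :=
    ((map_nonneg_iff_of_le_iff (hρ s)).1 hsw.le).lt_of_ne' ((ρ s).map_ne_zero_iff.1 hsw.ne')
  have hwu : w ≤ u := (hρ s _ _).2 (hw ▸ inf_le_left)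
  have hswv : ρ s w ≤ v := hw ▸ inf_le_right
  have hmono : {g : G | ρ g w ⊓ w ≠ 0} ≤ {g : G | ρ g x ⊓ x ≠ 0} := by
    intro g hg hgx
    refine hg (le_antisymm ?_ (le_inf ((map_nonneg_iff_of_le_iff (hρ g)).2 hw0.le) hw0.le))
    exact hgx ▸ inf_le_inf ((hρ g _ _).1 (hwu.trans hux)) (hwu.trans hux)
  have hsx : ρ s x ⊓ x ≠ 0 :=
    (hsw.trans_le (le_inf ((hρ s _ _).1 (hwu.trans hux)) (hswv.trans hvx))).ne'
  refine hmin hw0 hmono hsx (le_antisymm ?_ (le_inf hsw.le hw0.le))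
  exact (le_inf (inf_le_right.trans hwu) (inf_le_left.trans hswv)).trans huv.le

theorem IsPositiveRep.eq_one_of_map_eq_smul (hρ : IsPositiveRep ρ) {s : G} (hs : IsOfFinOrder s)
    {a : E} (ha : 0 < a) {l : ℝ} (h : ρ s a = l • a) : l = 1 := by
  have hl : 0 ≤ l := by
    by_contra! hneg
    have hle : ρ s a ≤ 0 := h ▸ smul_nonpos_of_nonpos_of_nonneg hneg.le ha.le
    exact (ρ s).map_ne_zero_iff.2 ha.ne'
      (le_antisymm hle ((map_nonneg_iff_of_le_iff (hρ s)).2 ha.le))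
  obtain ⟨n, hn, hsn⟩ := isOfFinOrder_iff_pow_eq_one.1 hs
  have hpow : ∀ k : ℕ, ρ (s ^ k) a = l ^ k • a := by
    intro k
    induction k with
    | zero => simp
    | succ k ih =>
      rw [pow_succ, map_mul, LinearEquiv.mul_apply, h, map_smul, ih, smul_smul, pow_succ']
  have hln : l ^ n • a = (1 : ℝ) • a := by
    rw [← hpow, hsn, map_one, LinearEquiv.coe_one, id_eq, one_smul]
  exact (pow_eq_one_iff_of_nonneg hl hn.ne').1 (smul_left_injective ℝ ha.ne' hln)

theorem IsRieszAtom.inf_map_eq_zero (hρ : IsPositiveRep ρ) {a : E} (ha : IsRieszAtom a) {s : G}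
    (hs : IsOfFinOrder s) (hsa : ρ s a ≠ a) : a ⊓ ρ s a = 0 := by
  by_contra hinf
  obtain ⟨t, ht⟩ := ha.exists_eq_smul_of_inf_ne_zero (ha.map_of_le_iff (hρ s)) hinf
  rw [hρ.eq_one_of_map_eq_smul hs ha.1 ht, one_smul] at ht
  exact hsa ht

theorem orderEquivalent_cosetRep_of_isRieszAtom {H : Subgroup G} [Finite (G ⧸ H)]
    (hE : RieszArchimedean E) {A : G ⧸ H → E} (hatom : ∀ c, IsRieszAtom (A c))
    (hdisj : Pairwise fun c d => A c ⊓ A d = 0)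
    (hbot : disjComplementSubmodule (Set.range A) = ⊥)
    (hequiv : ∀ (s : G) (c : G ⧸ H), A (s • c) = ρ s (A c)) :
    OrderEquivalent ρ (cosetRep G H) := by
  classical
  cases nonempty_fintype (G ⧸ H)
  have hpos : ∀ c, 0 < A c := fun c => (hatom c).1
  let b := Module.Basis.mk (linearIndependent_of_pairwise_inf_eq_zero hpos hdisj)
    (hE.span_range_eq_top_of_isRieszAtom hatom hdisj hbot).ge
  have hb : ∀ c, b c = A c := Module.Basis.mk_apply _ _
  have hnonneg : ∀ x : E, 0 ≤ x ↔ 0 ≤ b.equivFun x := by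
    intro x
    have hsum : ∑ c, b.equivFun x c • A c = x := by simpa only [hb] using b.sum_equivFun x
    refine ⟨fun hx => nonneg_of_sum_smul_nonneg hpos hdisj (hsum.symm ▸ hx), fun hx => ?_⟩
    rw [← hsum]
    exact Finset.sum_nonneg fun c _ => smul_nonneg (hx c) (hpos c).le
  refine ⟨b.equivFun, fun x y => ?_, fun s x => ?_⟩
  · rw [← sub_nonneg, hnonneg, map_sub, sub_nonneg]
  · have hcomm : b.equivFun.toLinearMap ∘ₗ (ρ s).toLinearMap =
        (cosetRep G H s).toLinearMap ∘ₗ b.equivFun.toLinearMap := b.ext fun c => by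
      have hbs : ρ s (b c) = b (s • c) := by rw [hb, hb, hequiv]
      simp [hbs, Finsupp.single_eq_pi_single, cosetRep_single]
    exact LinearMap.congr_fun hcomm x

theorem BandIrreducible.exists_orderEquivalent_cosetRep [Finite G] [Nontrivial E]
    (hirr : BandIrreducible ρ) (hρ : IsPositiveRep ρ) :
    ∃ H : Subgroup G, OrderEquivalent ρ (cosetRep G H) := by
  obtain ⟨a, ha⟩ := hirr.exists_isRieszAtom hρ
  let _ : MulAction G E := MulAction.compHom E ρ
  let A := MulAction.ofQuotientStabilizer G a
  refine ⟨MulAction.stabilizer G a, orderEquivalent_cosetRep_of_isRieszAtom (A := A)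
    (hirr.rieszArchimedean hρ) ?_ ?_ ?_ (MulAction.ofQuotientStabilizer_smul G a)⟩
  · exact fun c => c.induction_on fun s => ha.map_of_le_iff (hρ s)
  · intro c d
    induction c using QuotientGroup.induction_on with | H s
    induction d using QuotientGroup.induction_on with | H t
    intro hne
    have hA : ρ t a = ρ s (ρ (s⁻¹ * t) a) := by
      rw [← LinearEquiv.mul_apply, ← map_mul, mul_inv_cancel_left]
    have hmove : ρ (s⁻¹ * t) a ≠ a := fun hfix => hne (QuotientGroup.eq.2 hfix)
    change ρ s a ⊓ ρ t a = 0
    rw [hA, ← map_inf_of_le_iff (hρ s), ha.inf_map_eq_zero hρ (isOfFinOrder_of_finite _) hmove,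
      map_zero]
  · have hrange : Set.range A = Set.range fun s => ρ s a :=
      (QuotientGroup.mk_surjective.range_comp A).symm
    rw [hrange]
    exact hirr.disjComplementSubmodule_orbit_eq_bot hρ ha.1

end PositiveRepresentation

theorem stmt16_general (G : Type*) [Group G] :
    (∀ H : Subgroup G, BandIrreducible (cosetRep G H)) ∧
    (∀ H₁ H₂ : Subgroup G, (∃ r : G, ∀ g : G, g ∈ H₂ ↔ r * g * r⁻¹ ∈ H₁) →
      OrderEquivalent (cosetRep G H₁) (cosetRep G H₂)) ∧
    (∀ H₁ H₂ : Subgroup G, OrderEquivalent (cosetRep G H₁) (cosetRep G H₂) →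
      ∃ r : G, ∀ g : G, g ∈ H₂ ↔ r * g * r⁻¹ ∈ H₁) ∧
    (Finite G → ∀ (E : Type u) [AddCommGroup E] [Lattice E] [Module ℝ E],
      (∀ x y z : E, x ≤ y → x + z ≤ y + z) →
      (∀ (c : ℝ) (x : E), 0 ≤ c → 0 ≤ x → 0 ≤ c • x) →
      Nontrivial E → ∀ ρ : G →* (E ≃ₗ[ℝ] E), IsPositiveRep ρ → BandIrreducible ρ →
        ∃ H : Subgroup G, OrderEquivalent ρ (cosetRep G H)) := by
  refine ⟨bandIrreducible_cosetRep, fun _ _ ⟨_, h⟩ => orderEquivalent_cosetRep_of_conj h,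
    fun _ _ => OrderEquivalent.exists_conj, fun _ E _ _ _ hadd hsmul _ ρ hρ hirr => ?_⟩
  have : IsOrderedAddMonoid E := { add_le_add_left := fun x y h z => hadd x y z h }
  have : IsOrderedModule ℝ E := .of_smul_nonneg fun c hc x hx => hsmul c x hc hx
  exact hirr.exists_orderEquivalent_cosetRep hρ

/-- For a finite group `G`: (a) each canonical representation `π^H` on `C(G/H)` is band
irreducible; (b) conjugate subgroups give order equivalent representations `π^H`;
(c) subgroups with order equivalent representations `π^H` are conjugate; (d) every band
irreducible positive representation of `G` in a nonzero finite dimensional Archimedean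
Riesz space is order equivalent to some `π^H`. -/
theorem stmt16 (G : Type*) [Group G] [Finite G] :
    (∀ H : Subgroup G, BandIrreducible (cosetRep G H)) ∧
    (∀ H₁ H₂ : Subgroup G, (∃ r : G, ∀ g : G, g ∈ H₂ ↔ r * g * r⁻¹ ∈ H₁) →
      ∃ T : (G ⧸ H₁ → ℝ) ≃ₗ[ℝ] (G ⧸ H₂ → ℝ),
        (∀ x y : G ⧸ H₁ → ℝ, x ≤ y ↔ T x ≤ T y) ∧
        ∀ (s : G) (f : G ⧸ H₁ → ℝ), T (cosetRep G H₁ s f) = cosetRep G H₂ s (T f)) ∧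
    (∀ H₁ H₂ : Subgroup G,
      (∃ T : (G ⧸ H₁ → ℝ) ≃ₗ[ℝ] (G ⧸ H₂ → ℝ),
        (∀ x y : G ⧸ H₁ → ℝ, x ≤ y ↔ T x ≤ T y) ∧
        ∀ (s : G) (f : G ⧸ H₁ → ℝ), T (cosetRep G H₁ s f) = cosetRep G H₂ s (T f)) →
      ∃ r : G, ∀ g : G, g ∈ H₂ ↔ r * g * r⁻¹ ∈ H₁) ∧
    (∀ (E : Type u) [AddCommGroup E] [Lattice E] [Module ℝ E],
      (∀ x y z : E, x ≤ y → x + z ≤ y + z) →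
      (∀ (c : ℝ) (x : E), 0 ≤ c → 0 ≤ x → 0 ≤ c • x) →
      Nontrivial E → FiniteDimensional ℝ E → RieszArchimedean E →
      ∀ ρ : G →* (E ≃ₗ[ℝ] E), IsPositiveRep ρ → BandIrreducible ρ →
        ∃ (H : Subgroup G) (T : E ≃ₗ[ℝ] (G ⧸ H → ℝ)),
          (∀ x y : E, x ≤ y ↔ T x ≤ T y) ∧
          ∀ (s : G) (x : E), T (ρ s x) = cosetRep G H s (T x)) :=
  let ⟨ha, hb, hc, hd⟩ := stmt16_general G
  ⟨ha, hb, hc, fun E _ _ _ hadd hsmul hE _ _ => hd inferInstance E hadd hsmul hE⟩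
end

section
/- Let G be a finite group and let H₁, …, H_k be representatives of the conjugacy classes of subgroups of G. Let E be a finite dimensional Archimedean Riesz space and ρ : G → Aut⁺(E) a positive representation. Then there exist unique nonnegative integers n₁, …, n_k such that ρ is order equivalent to the order direct sum n₁ π^{H₁} ⊕ ⋯ ⊕ n_k π^{H_k}, where n_i π^{H_i} denotes the n_i-fold order direct sum of π^{H_i}. -/
/-- The order direct sum `n₁ π^{H₁} ⊕ ⋯ ⊕ n_k π^{H_k}` of multiples of the canonical
representations, acting componentwise on the order direct sum of the corresponding
function spaces. -/
noncomputable def multiRep (G : Type*) [Group G] {k : ℕ} (H : Fin k → Subgroup G)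
    (n : Fin k → ℕ) :
    G →* ((∀ i : Fin k, Fin (n i) → (G ⧸ H i → ℝ)) ≃ₗ[ℝ]
          (∀ i : Fin k, Fin (n i) → (G ⧸ H i → ℝ))) where
  toFun s := LinearEquiv.piCongrRight fun i =>
    LinearEquiv.piCongrRight fun _ => cosetRep G (H i) s
  map_one' := by
    apply LinearEquiv.ext
    intro f
    funext i j
    simp
  map_mul' s t := by
    apply LinearEquiv.ext
    intro f
    funext i j
    simp only [map_mul]
    rfl

/-!
A disjoint system of largest cardinality in a finite dimensional Archimedean Riesz space consists
of atoms and spans, so that the order is coordinatewise in the resulting basis. Conversely the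
members of such a basis are, up to scaling, all the atoms, and a lattice automorphism permutes the
atoms up to scaling. Summing the coordinates and then averaging over the finite group gives a
strictly positive invariant functional; once the atoms are normalized by it, the group permutes
them exactly.

An order equivalence with `n₁ π^{H₁} ⊕ ⋯ ⊕ n_k π^{H_k}` thus amounts to an isomorphism of the
`G`-set of normalized atoms with the disjoint union of `nᵢ` copies of each `G ⧸ Hᵢ`. Splitting into
orbits gives existence, and `nᵢ` is unique because `nᵢ · [G : Hᵢ]` is the number of points whose
stabilizer is conjugate to `Hᵢ`.
-/

section DisjointElements

variable {𝕜 E ι : Type*} [AddCommGroup E] [Lattice E] [IsOrderedAddMonoid E]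

theorem inf_add_eq_zero {a b c : E} (hab : a ⊓ b = 0) (hac : a ⊓ c = 0) : a ⊓ (b + c) = 0 := by
  have ha : 0 ≤ a := hab ▸ inf_le_left
  have hb : 0 ≤ b := hab ▸ inf_le_right
  have hc : 0 ≤ c := hac ▸ inf_le_right
  have hle : a ⊓ (b + c) ≤ b := by
    rw [← sub_nonpos, ← hac]
    exact le_inf ((sub_le_self _ hb).trans inf_le_left) (sub_le_iff_le_add'.2 inf_le_right)
  exact le_antisymm (hab ▸ le_inf inf_le_left hle) (le_inf ha (add_nonneg hb hc))

theorem inf_sum_eq_zero {a : E} (ha : 0 ≤ a) {s : Finset ι} {f : ι → E}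
    (h : ∀ i ∈ s, a ⊓ f i = 0) : a ⊓ ∑ i ∈ s, f i = 0 :=
  Finset.sum_induction f (fun b => a ⊓ b = 0) (fun _ _ => inf_add_eq_zero) (inf_eq_right.2 ha) h

variable [Field 𝕜] [LinearOrder 𝕜] [IsStrictOrderedRing 𝕜] [Module 𝕜 E] [IsOrderedModule 𝕜 E]

theorem inf_smul_eq_zero {a b : E} (hab : a ⊓ b = 0) {t : 𝕜} (ht : 0 ≤ t) : a ⊓ t • b = 0 := by
  have ha : 0 ≤ a := hab ▸ inf_le_left
  have hb : 0 ≤ b := hab ▸ inf_le_right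
  have hM : 0 < max t 1 := lt_max_of_lt_right one_pos
  refine le_antisymm ?_ (le_inf ha (smul_nonneg ht hb))
  calc a ⊓ t • b ≤ (max t 1 • a) ⊓ (max t 1 • b) :=
        inf_le_inf (le_smul_of_one_le_left ha (le_max_right t 1))
          (smul_le_smul_of_nonneg_right (le_max_left t 1) hb)
    _ = max t 1 • (a ⊓ b) := ((OrderIso.smulRight hM).map_inf a b).symm
    _ = 0 := by rw [hab, smul_zero]

variable {x : ι → E} (hpos : ∀ i, 0 < x i) (hdisj : Pairwise fun i j => x i ⊓ x j = 0)
include hpos hdisj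

theorem nonneg_of_sum_smul_nonneg_s17 {s : Finset ι} {g : ι → 𝕜} (h : 0 ≤ ∑ i ∈ s, g i • x i)
    {j : ι} (hj : j ∈ s) : 0 ≤ g j := by
  classical
  by_contra! hneg
  have hle : -g j • x j ≤ ∑ i ∈ s.erase j, max (g i) 0 • x i :=
    calc -g j • x j ≤ ∑ i ∈ s.erase j, g i • x i := by
          rwa [neg_smul, neg_le_iff_add_nonneg', Finset.add_sum_erase s (fun i => g i • x i) hj]
      _ ≤ ∑ i ∈ s.erase j, max (g i) 0 • x i := Finset.sum_le_sum fun i _ =>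
          smul_le_smul_of_nonneg_right (le_max_left _ _) (hpos i).le
  have hinf : (∑ i ∈ s.erase j, max (g i) 0 • x i) ⊓ -g j • x j = 0 := by
    refine inf_smul_eq_zero ?_ (neg_pos.2 hneg).le
    rw [inf_comm]
    exact inf_sum_eq_zero (hpos j).le fun i hi =>
      inf_smul_eq_zero (hdisj (Finset.ne_of_mem_erase hi).symm) (le_max_right _ _)
  rw [inf_eq_right.2 hle] at hinf
  exact smul_ne_zero (neg_pos.2 hneg).ne' (hpos j).ne' hinf

variable (𝕜) in
theorem linearIndependent_of_pairwise_inf_eq_zero_s17 : LinearIndependent 𝕜 x := by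
  refine linearIndependent_iff'.2 fun s g hg j hj => le_antisymm ?_ ?_
  · have hneg : 0 ≤ ∑ i ∈ s, (-g i) • x i := by
      simp only [neg_smul, Finset.sum_neg_distrib, hg, neg_zero, le_refl]
    exact neg_nonneg.1 (nonneg_of_sum_smul_nonneg_s17 hpos hdisj hneg hj)
  · exact nonneg_of_sum_smul_nonneg_s17 hpos hdisj hg.ge hj

end DisjointElements

section Atoms

variable {𝕜 E F : Type*}

/-- An atom of an ordered vector space: a strictly positive element `e` such that the order
interval `[0, e]` consists of multiples of `e`. In a finite dimensional Archimedean Riesz space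
these elements are, up to scaling, the vectors of the coordinatewise ordered basis. -/
structure IsRieszAtom_s17 (𝕜 : Type*) [Zero E] [PartialOrder E] [SMul 𝕜 E] (e : E) :
    Prop where
  pos : 0 < e
  exists_eq_smul : ∀ x, 0 ≤ x → x ≤ e → ∃ t : 𝕜, x = t • e

theorem IsRieszAtom_s17.map [Semiring 𝕜] [AddCommMonoid E] [PartialOrder E] [Module 𝕜 E]
    [AddCommMonoid F] [PartialOrder F] [Module 𝕜 F] {e : E} (he : IsRieszAtom_s17 𝕜 e)
    (T : E ≃ₗ[𝕜] F) (hT : ∀ x y, x ≤ y ↔ T x ≤ T y) : IsRieszAtom_s17 𝕜 (T e) where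
  pos := by
    refine lt_of_le_of_ne ?_ (T.map_ne_zero_iff.2 he.pos.ne').symm
    rw [← map_zero T, ← hT]
    exact he.pos.le
  exists_eq_smul y hy hye := by
    obtain ⟨x, rfl⟩ := T.surjective y
    rw [← map_zero T, ← hT] at hy
    obtain ⟨t, rfl⟩ := he.exists_eq_smul x hy ((hT x e).2 hye)
    exact ⟨t, map_smul T t e⟩

end Atoms

section Archimedean

variable {E : Type*} [AddCommGroup E] [Lattice E] [IsOrderedAddMonoid E] [Module ℝ E]
  [IsOrderedModule ℝ E]

namespace RieszArchimedean

variable (harch : RieszArchimedean E)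
include harch

theorem nonpos_of_forall_le_smul {x y : E} (hy : 0 ≤ y) (h : ∀ ε : ℝ, 0 < ε → x ≤ ε • y) :
    x ≤ 0 := by
  refine sup_eq_right.1 (harch (x ⊔ 0) y fun n hn => ⟨nsmul_nonneg le_sup_right n, ?_⟩)
  have hn' : (0 : ℝ) < n := Nat.cast_pos.2 hn
  have hle : x ⊔ 0 ≤ (n : ℝ)⁻¹ • y :=
    sup_le (h _ (inv_pos.2 hn')) (smul_nonneg (inv_pos.2 hn').le hy)
  rwa [← Nat.cast_smul_eq_nsmul ℝ, ← le_inv_smul_iff_of_pos hn']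

theorem bddAbove_setOf_smul_le {e x : E} (he : 0 < e) : BddAbove {t : ℝ | t • e ≤ x} := by
  by_contra hunbdd
  refine he.ne' (harch e x fun n _ => ⟨nsmul_nonneg he.le n, ?_⟩)
  obtain ⟨t, ht, hnt⟩ := not_bddAbove_iff.1 hunbdd n
  rw [← Nat.cast_smul_eq_nsmul ℝ]
  exact (smul_le_smul_of_nonneg_right hnt.le he.le).trans ht

theorem exists_isGreatest_smul_le_s17 {e x : E} (he : 0 < e) (hx : 0 ≤ x) :
    ∃ t, IsGreatest {t : ℝ | t • e ≤ x} t := by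
  have hbdd := harch.bddAbove_setOf_smul_le (x := x) he
  have hne : {t : ℝ | t • e ≤ x}.Nonempty := ⟨0, by simpa using hx⟩
  refine ⟨sSup {t : ℝ | t • e ≤ x}, sub_nonpos.1 ?_, fun t ht => le_csSup hbdd ht⟩
  refine harch.nonpos_of_forall_le_smul he.le fun ε hε => ?_
  obtain ⟨t, ht, hlt⟩ := exists_lt_of_lt_csSup hne (sub_lt_self _ hε)
  rw [sub_le_iff_le_add']
  calc sSup {t : ℝ | t • e ≤ x} • e ≤ (t + ε) • e :=
        smul_le_smul_of_nonneg_right (sub_lt_iff_lt_add.1 hlt).le he.le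
    _ = t • e + ε • e := add_smul t ε e
    _ ≤ x + ε • e := by gcongr; exact ht

theorem isRieszAtom_of_indecomposable {e : E} (he : 0 < e)
    (hindec : ∀ x y, x ≤ e → y ≤ e → x ⊓ y = 0 → x = 0 ∨ y = 0) : IsRieszAtom_s17 ℝ e := by
  refine ⟨he, fun x hx hxe => ?_⟩
  obtain ⟨t, ht, hmax⟩ := harch.exists_isGreatest_smul_le_s17 he hx
  have ht0 : 0 ≤ t := hmax (show (0 : ℝ) • e ≤ x by rwa [zero_smul])
  refine ⟨t, (sub_nonpos.1 ?_).antisymm ht⟩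
  -- The parts of `x - (t + ε) • e` are disjoint and below `e`, so one of them vanishes; the
  -- negative part cannot, by the maximality of `t`.
  have hsmall : ∀ ε : ℝ, 0 < ε → ε ≤ 1 → x - t • e ≤ ε • e := by
    intro ε hε hε1
    set z := x - t • e - ε • e with hz
    have hzpos : z⁺ ≤ e := by
      refine sup_le ?_ he.le
      exact (sub_le_self _ (smul_nonneg hε.le he.le)).trans
        ((sub_le_self _ (smul_nonneg ht0 he.le)).trans hxe)
    have hzneg : z⁻ ≤ e := by
      refine sup_le ?_ he.le
      rw [hz, neg_sub]
      exact (sub_le_self _ (sub_nonneg.2 ht)).trans (smul_le_of_le_one_left he.le hε1)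
    rcases hindec _ _ hzpos hzneg (posPart_inf_negPart_eq_zero z) with h | h
    · exact sub_nonpos.1 (posPart_eq_zero.1 h)
    · have hmem : (t + ε) • e ≤ x := by
        rw [add_smul, ← sub_nonneg, ← sub_sub]
        exact negPart_eq_zero.1 h
      exact absurd (hmax hmem) (by linarith)
  refine harch.nonpos_of_forall_le_smul he.le fun ε hε => ?_
  exact (hsmall (min ε 1) (lt_min hε one_pos) (min_le_right _ _)).trans
    (smul_le_smul_of_nonneg_right (min_le_left _ _) he.le)

theorem exists_smul_mem_Icc_sub_inf_eq_zero {e x : E} (he : IsRieszAtom_s17 ℝ e) (hx : 0 ≤ x) :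
    ∃ t : ℝ, t • e ∈ Set.Icc 0 x ∧ (x - t • e) ⊓ e = 0 := by
  obtain ⟨t, ht, hmax⟩ := harch.exists_isGreatest_smul_le_s17 he.pos hx
  have ht0 : 0 ≤ t := hmax (show (0 : ℝ) • e ≤ x by rwa [zero_smul])
  have hinf : 0 ≤ (x - t • e) ⊓ e := le_inf (sub_nonneg.2 ht) he.pos.le
  refine ⟨t, ⟨smul_nonneg ht0 he.pos.le, ht⟩, hinf.antisymm' ?_⟩
  obtain ⟨r, hr⟩ := he.exists_eq_smul _ hinf inf_le_right
  have hmem : (t + r) • e ≤ x := by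
    rw [add_smul, ← hr, ← le_sub_iff_add_le']
    exact inf_le_left
  have hr0 : r ≤ 0 := by linarith [hmax hmem]
  exact hr ▸ smul_nonpos_of_nonpos_of_nonneg hr0 he.pos.le

theorem exists_mem_span_sub_inf_eq_zero {S : Finset E} (hS : ∀ e ∈ S, IsRieszAtom_s17 ℝ e) {x : E}
    (hx : 0 ≤ x) :
    ∃ y ∈ Submodule.span ℝ (S : Set E), y ∈ Set.Icc 0 x ∧ ∀ e ∈ S, (x - y) ⊓ e = 0 := by
  classical
  induction S using Finset.induction_on generalizing x with
  | empty => exact ⟨0, Submodule.zero_mem _, ⟨le_rfl, hx⟩, by simp⟩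
  | insert e S _ ih =>
    obtain ⟨t, ⟨hte, htx⟩, ht⟩ := harch.exists_smul_mem_Icc_sub_inf_eq_zero (hS e (by simp)) hx
    obtain ⟨y, hyS, ⟨hy, hyx⟩, hinf⟩ :=
      ih (fun f hf => hS f (Finset.mem_insert_of_mem hf)) (sub_nonneg.2 htx)
    refine ⟨t • e + y, ?_, ⟨add_nonneg hte hy, le_sub_iff_add_le'.1 hyx⟩, ?_⟩
    · rw [Finset.coe_insert]
      exact Submodule.add_mem _
        (Submodule.smul_mem _ _ (Submodule.subset_span (Set.mem_insert e _)))
        (Submodule.span_mono (Set.subset_insert e _) hyS)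
    · rw [← sub_sub]
      refine Finset.forall_mem_insert .. |>.2 ⟨le_antisymm ?_ ?_, hinf⟩
      · exact (inf_le_inf_right e (sub_le_self _ hy)).trans ht.le
      · exact le_inf (sub_nonneg.2 hyx) (hS e (by simp)).pos.le

end RieszArchimedean

end Archimedean

section OrderBases

variable {𝕜 E ι κ : Type*} [Field 𝕜] [LinearOrder 𝕜] [AddCommGroup E] [Module 𝕜 E]

/-- A basis of an ordered vector space whose coordinates identify the order with the
coordinatewise one. -/
def IsOrderBasis [LE E] (b : Module.Basis ι 𝕜 E) : Prop :=
  ∀ x, 0 ≤ x ↔ ∀ i, 0 ≤ b.repr x i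

theorem isOrderBasis_of_pairwise_inf_eq_zero [IsStrictOrderedRing 𝕜] [Lattice E]
    [IsOrderedAddMonoid E] [IsOrderedModule 𝕜 E] [Finite ι] (b : Module.Basis ι 𝕜 E)
    (hpos : ∀ i, 0 < b i) (hdisj : Pairwise fun i j => b i ⊓ b j = 0) : IsOrderBasis b := by
  have := Fintype.ofFinite ι
  intro x
  nth_rewrite 1 [← b.sum_repr x]
  exact ⟨fun h i => nonneg_of_sum_smul_nonneg_s17 hpos hdisj h (Finset.mem_univ i),
    fun h => Finset.sum_nonneg fun i _ => smul_nonneg (h i) (hpos i).le⟩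

namespace IsOrderBasis

variable {b : Module.Basis ι 𝕜 E}

theorem reindex [LE E] (hb : IsOrderBasis b) (e : ι ≃ κ) : IsOrderBasis (b.reindex e) :=
  fun x => by
    simp only [hb x, Module.Basis.repr_reindex_apply, e.symm.forall_congr_left, Equiv.symm_symm,
      Equiv.symm_apply_apply]

variable [PartialOrder E] [IsStrictOrderedRing 𝕜]

theorem pos (hb : IsOrderBasis b) (i : ι) : 0 < b i := by
  classical
  refine lt_of_le_of_ne ((hb _).2 fun j => ?_) (b.ne_zero i).symm
  rw [b.repr_self, Finsupp.single_apply]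
  split_ifs <;> simp

theorem sum_repr_pos [Fintype ι] (hb : IsOrderBasis b) {x : E} (hx : 0 < x) :
    0 < ∑ i, b.repr x i := by
  have hnonneg := (hb x).1 hx.le
  refine (Finset.sum_nonneg fun i _ => hnonneg i).lt_of_ne' fun hsum => hx.ne' ?_
  refine b.ext_elem fun i => ?_
  simpa using (Finset.sum_eq_zero_iff_of_nonneg fun i _ => hnonneg i).1 hsum i (Finset.mem_univ i)

theorem exists_normalized (hb : IsOrderBasis b) {φ : E →ₗ[𝕜] 𝕜} (hφ : ∀ x, 0 < x → 0 < φ x) :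
    ∃ b' : Module.Basis ι 𝕜 E, IsOrderBasis b' ∧ ∀ i, φ (b' i) = 1 := by
  have hφb : ∀ i, 0 < φ (b i) := fun i => hφ _ (hb.pos i)
  let w : ι → 𝕜ˣ := fun i => (Units.mk0 (φ (b i)) (hφb i).ne')⁻¹
  refine ⟨b.unitsSMul w, fun x => ?_, fun i => ?_⟩
  · have hrepr : ∀ i, (b.unitsSMul w).repr x i = φ (b i) * b.repr x i := fun i => by
      simp [w, Module.Basis.repr_unitsSMul, Units.smul_def]
    simp only [hb x, hrepr, mul_nonneg_iff_of_pos_left (hφb _)]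
  · simp [w, Module.Basis.unitsSMul_apply, Units.smul_def, (hφb i).ne']

variable [IsOrderedAddMonoid E]

theorem le_iff (hb : IsOrderBasis b) {x y : E} : x ≤ y ↔ ∀ i, b.repr x i ≤ b.repr y i := by
  rw [← sub_nonneg, hb]
  simp only [map_sub, Finsupp.sub_apply, sub_nonneg]

theorem isRieszAtom (hb : IsOrderBasis b) (i : ι) : IsRieszAtom_s17 𝕜 (b i) where
  pos := hb.pos i
  exists_eq_smul x hx hxi := by
    refine ⟨b.repr x i, b.ext_elem fun j => ?_⟩
    by_cases hji : j = i
    · simp [hji]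
    · have hle := hb.le_iff.1 hxi j
      rw [b.repr_self, Finsupp.single_eq_of_ne hji] at hle
      simp [hle.antisymm ((hb x).1 hx j), Finsupp.single_eq_of_ne hji]

theorem exists_eq_smul_of_isRieszAtom (hb : IsOrderBasis b) {e : E} (he : IsRieszAtom_s17 𝕜 e) :
    ∃ i, ∃ c : 𝕜, 0 < c ∧ e = c • b i := by
  classical
  have hnonneg := (hb e).1 he.pos.le
  obtain ⟨i, hi⟩ : ∃ i, b.repr e i ≠ 0 := by
    by_contra! hzero
    exact he.pos.ne' (b.ext_elem fun i => by simpa using hzero i)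
  have hle : b.repr e i • b i ≤ e := hb.le_iff.2 fun j => by
    by_cases hji : j = i
    · simp [hji]
    · simpa [Finsupp.single_eq_of_ne hji] using hnonneg j
  have hge : 0 ≤ b.repr e i • b i := (hb _).2 fun j => by
    rw [map_smul, Finsupp.smul_apply, smul_eq_mul]
    exact mul_nonneg (hnonneg i) ((hb _).1 (hb.pos i).le j)
  obtain ⟨t, ht⟩ := he.exists_eq_smul _ hge hle
  have ht0 : t ≠ 0 := by
    rintro rfl
    rw [zero_smul] at ht
    exact smul_ne_zero hi (b.ne_zero i) ht
  have heq : e = (t⁻¹ * b.repr e i) • b i := by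
    rw [mul_smul, ht, inv_smul_smul₀ ht0]
  have hc : b.repr e i = t⁻¹ * b.repr e i := by
    simpa using congrArg (fun v => b.repr v i) heq
  exact ⟨i, b.repr e i, (hnonneg i).lt_of_ne' hi, by rwa [← hc] at heq⟩

theorem exists_equiv_eq_smul (hb : IsOrderBasis b) {b' : Module.Basis κ 𝕜 E}
    (hb' : IsOrderBasis b') : ∃ (e : ι ≃ κ) (c : ι → 𝕜), ∀ i, 0 < c i ∧ b i = c i • b' (e i) := by
  choose f c hc hf using fun i => hb'.exists_eq_smul_of_isRieszAtom (hb.isRieszAtom i)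
  choose g d _ hg using fun j => hb.exists_eq_smul_of_isRieszAtom (hb'.isRieszAtom j)
  have hgf : Function.LeftInverse g f := fun i =>
    (b.linearIndependent.eq_of_smul_apply_eq_smul_apply 1 (c i * d (f i)) i _ one_ne_zero
      (by rw [one_smul, mul_smul, ← hg, ← hf])).symm
  have hfg : Function.RightInverse g f := fun j =>
    (b'.linearIndependent.eq_of_smul_apply_eq_smul_apply 1 (d j * c (g j)) j _ one_ne_zero
      (by rw [one_smul, mul_smul, ← hf, ← hg])).symm
  exact ⟨⟨f, g, hgf, hfg⟩, c, fun i => ⟨hc i, hf i⟩⟩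

end IsOrderBasis

end OrderBases

section DisjointSystems

variable {E : Type*} [AddCommGroup E] [Lattice E]

/-- A disjoint system of a Riesz space: a set of pairwise disjoint strictly positive elements. -/
structure IsDisjointSystem (S : Set E) : Prop where
  pos : ∀ x ∈ S, 0 < x
  inf_eq_zero : S.Pairwise fun x y => x ⊓ y = 0

theorem IsDisjointSystem.mono {S T : Set E} (hT : IsDisjointSystem T) (hST : S ⊆ T) :
    IsDisjointSystem S :=
  ⟨fun x hx => hT.pos x (hST hx), hT.inf_eq_zero.mono hST⟩

theorem IsDisjointSystem.insert {S : Set E} (hS : IsDisjointSystem S) {x : E} (hx : 0 < x)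
    (hinf : ∀ y ∈ S, x ⊓ y = 0) : IsDisjointSystem (insert x S) := by
  refine ⟨Set.forall_mem_insert.2 ⟨hx, hS.pos⟩, hS.inf_eq_zero.insert fun y hy _ => ?_⟩
  exact ⟨hinf y hy, inf_comm x y ▸ hinf y hy⟩

/-- A disjoint system with the largest possible number of elements. -/
abbrev IsMaxDisjointSystem (S : Finset E) : Prop :=
  MaximalFor (fun S : Finset E => IsDisjointSystem (S : Set E)) Finset.card S

namespace IsMaxDisjointSystem

variable {S : Finset E} (hS : IsMaxDisjointSystem S)
include hS

theorem card_le {T : Finset E} (hT : IsDisjointSystem (T : Set E)) : T.card ≤ S.card :=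
  not_lt.1 fun hlt => hS.not_prop_of_gt hlt hT

theorem eq_zero_of_forall_inf_eq_zero {x : E} (hx : 0 ≤ x) (hinf : ∀ e ∈ S, x ⊓ e = 0) :
    x = 0 := by
  classical
  by_contra hne
  have hpos : 0 < x := hx.lt_of_ne' hne
  have hnotMem : x ∉ S := fun hxS => hne (by simpa using hinf x hxS)
  have hinsert : IsDisjointSystem ((insert x S : Finset E) : Set E) := by
    rw [Finset.coe_insert]
    exact hS.prop.insert hpos hinf
  have hcard := hS.card_le hinsert
  rw [Finset.card_insert_of_notMem hnotMem] at hcard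
  omega

theorem eq_zero_or_eq_zero_of_le {e x y : E} (he : e ∈ S) (hxe : x ≤ e) (hye : y ≤ e)
    (hxy : x ⊓ y = 0) : x = 0 ∨ y = 0 := by
  classical
  -- Otherwise replacing `e` by `x` and `y` gives a larger disjoint system.
  by_contra! hne
  have hx : 0 < x := (hxy ▸ inf_le_left : 0 ≤ x).lt_of_ne' hne.1
  have hy : 0 < y := (hxy ▸ inf_le_right : 0 ≤ y).lt_of_ne' hne.2
  have hinf : ∀ z, 0 < z → z ≤ e → ∀ f ∈ S.erase e, z ⊓ f = 0 := by
    intro z hz hze f hf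
    have hfS := Finset.mem_of_mem_erase hf
    refine le_antisymm ?_ (le_inf hz.le (hS.prop.pos f hfS).le)
    exact (inf_le_inf_right f hze).trans
      (hS.prop.inf_eq_zero he hfS (Finset.ne_of_mem_erase hf).symm).le
  have hyS : y ∉ S.erase e := fun h => hne.2 (by simpa using hinf y hy hye y h)
  have hxS : x ∉ insert y (S.erase e) := by
    rw [Finset.mem_insert, not_or]
    exact ⟨fun h => hne.2 (by simpa [h] using hxy),
      fun h => hne.1 (by simpa using hinf x hx hxe x h)⟩
  have hsplit : IsDisjointSystem ((insert x (insert y (S.erase e)) : Finset E) : Set E) := by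
    rw [Finset.coe_insert, Finset.coe_insert]
    refine ((hS.prop.mono (Finset.erase_subset e S)).insert hy (hinf y hy hye)).insert hx ?_
    exact Set.forall_mem_insert.2 ⟨hxy, hinf x hx hxe⟩
  have hcard := hS.card_le hsplit
  rw [Finset.card_insert_of_notMem hxS, Finset.card_insert_of_notMem hyS,
    Finset.card_erase_of_mem he] at hcard
  have := Finset.card_pos.2 ⟨e, he⟩
  omega

end IsMaxDisjointSystem

variable {𝕜 : Type*} [Field 𝕜] [LinearOrder 𝕜] [IsStrictOrderedRing 𝕜] [IsOrderedAddMonoid E]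
  [Module 𝕜 E] [IsOrderedModule 𝕜 E]

theorem IsDisjointSystem.linearIndependent {S : Set E}
    (hS : IsDisjointSystem S) : LinearIndependent 𝕜 (Subtype.val : S → E) :=
  linearIndependent_of_pairwise_inf_eq_zero_s17 𝕜 (fun x => hS.pos x x.2)
    ((pairwise_subtype_iff_pairwise_set _ _).2 hS.inf_eq_zero)

variable (E 𝕜) in
theorem exists_isMaxDisjointSystem [FiniteDimensional 𝕜 E] :
    ∃ S : Finset E, IsMaxDisjointSystem S := by
  refine Set.Finite.exists_maximalFor' _ {S : Finset E | IsDisjointSystem (S : Set E)} ?_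
    ⟨∅, by simp, by simp⟩
  refine (Set.finite_Iic (Module.finrank 𝕜 E)).subset ?_
  rintro _ ⟨S, hS, rfl⟩
  exact (hS.linearIndependent (𝕜 := 𝕜)).finset_card_le_finrank

-- Judin's theorem
theorem RieszArchimedean.exists_isOrderBasis [Module ℝ E] [IsOrderedModule ℝ E]
    [FiniteDimensional ℝ E] (harch : RieszArchimedean E) :
    ∃ b : Module.Basis (Fin (Module.finrank ℝ E)) ℝ E, IsOrderBasis b := by
  obtain ⟨S, hS⟩ := exists_isMaxDisjointSystem E ℝ
  have hatom : ∀ e ∈ S, IsRieszAtom_s17 ℝ e := fun e he =>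
    harch.isRieszAtom_of_indecomposable (hS.prop.pos e he) fun x y =>
      hS.eq_zero_or_eq_zero_of_le he
  have hspan_of_nonneg : ∀ x : E, 0 ≤ x → x ∈ Submodule.span ℝ (S : Set E) := by
    intro x hx
    obtain ⟨y, hyS, hyx, hinf⟩ := harch.exists_mem_span_sub_inf_eq_zero hatom hx
    rwa [sub_eq_zero.1 (hS.eq_zero_of_forall_inf_eq_zero (sub_nonneg.2 hyx.2) hinf)]
  have hspan : ⊤ ≤ Submodule.span ℝ (Set.range (Subtype.val : S → E)) := by
    intro x _
    rw [Subtype.range_coe, ← posPart_sub_negPart x]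
    exact Submodule.sub_mem _ (hspan_of_nonneg _ (posPart_nonneg x))
      (hspan_of_nonneg _ (negPart_nonneg x))
  let b : Module.Basis S ℝ E := Module.Basis.mk hS.prop.linearIndependent hspan
  have hb : ∀ e, b e = e := Module.Basis.mk_apply _ _
  have hbasis : IsOrderBasis b := isOrderBasis_of_pairwise_inf_eq_zero b
    (fun e => (hb e).symm ▸ hS.prop.pos e e.2)
    fun e f hef => by
      change b e ⊓ b f = 0
      rw [hb, hb]
      exact hS.prop.inf_eq_zero e.2 f.2 (Subtype.coe_ne_coe.2 hef)
  have hcard : Fintype.card S = Module.finrank ℝ E := (Module.finrank_eq_card_basis b).symm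
  exact ⟨b.reindex (Fintype.equivFinOfCardEq hcard), hbasis.reindex _⟩

end DisjointSystems

section PermutationBases

variable {𝕜 G E ι κ : Type*} [Group G] [Field 𝕜] [LinearOrder 𝕜] [AddCommGroup E] [Module 𝕜 E]

/-- An order basis that is permuted by a linear representation `ρ` of `G`, by way of a given
action of `G` on the index set. -/
structure IsPermutationBasis [LE E] [SMul G ι] (ρ : G →* (E ≃ₗ[𝕜] E)) (b : Module.Basis ι 𝕜 E) :
    Prop where
  isOrderBasis : IsOrderBasis b
  map_apply : ∀ s i, ρ s (b i) = b (s • i)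

variable [MulAction G ι] [MulAction G κ] {ρ : G →* (E ≃ₗ[𝕜] E)}

theorem isPermutationBasis_iff_repr [LE E] {b : Module.Basis ι 𝕜 E} :
    IsPermutationBasis ρ b ↔
      IsOrderBasis b ∧ ∀ s x i, b.repr (ρ s x) i = b.repr x (s⁻¹ • i) := by
  classical
  refine ⟨fun hb => ⟨hb.isOrderBasis, fun s x i => ?_⟩, fun ⟨hb, hrepr⟩ => ⟨hb, fun s i => ?_⟩⟩
  · have hcoord : b.coord i ∘ₗ (ρ s).toLinearMap = b.coord (s⁻¹ • i) := b.ext fun j => by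
      simp [hb.map_apply, Finsupp.single_apply, eq_inv_smul_iff]
    exact LinearMap.congr_fun hcoord x
  · exact b.ext_elem fun j => by simp [hrepr, Finsupp.single_apply, eq_inv_smul_iff]

namespace IsPermutationBasis

variable [IsStrictOrderedRing 𝕜] [PartialOrder E] [IsOrderedAddMonoid E] {b : Module.Basis ι 𝕜 E}
  (hb : IsPermutationBasis ρ b)
include hb

theorem exists_bijective_mulActionHom {b' : Module.Basis κ 𝕜 E} (hb' : IsPermutationBasis ρ b') :
    ∃ f : ι →[G] κ, Function.Bijective f := by
  obtain ⟨e, c, hec⟩ := hb.isOrderBasis.exists_equiv_eq_smul hb'.isOrderBasis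
  refine ⟨⟨e, fun s i => ?_⟩, e.bijective⟩
  have hsmul : c (s • i) • b' (e (s • i)) = c i • b' (s • e i) := by
    rw [← (hec (s • i)).2, ← hb.map_apply, (hec i).2, map_smul, hb'.map_apply]
  exact b'.linearIndependent.eq_of_smul_apply_eq_smul_apply _ _ _ _ (hec (s • i)).1.ne' hsmul

theorem exists_isPermutationBasis_iff :
    (∃ b' : Module.Basis κ 𝕜 E, IsPermutationBasis ρ b') ↔
      ∃ f : κ →[G] ι, Function.Bijective f := by
  refine ⟨fun ⟨b', hb'⟩ => hb'.exists_bijective_mulActionHom hb, fun ⟨f, hf⟩ => ?_⟩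
  refine ⟨b.reindex (Equiv.ofBijective f hf).symm, hb.isOrderBasis.reindex _, fun s j => ?_⟩
  simp [hb.map_apply]

end IsPermutationBasis

end PermutationBases

section PositiveRepresentations

variable {G E ι : Type*} [Group G] [AddCommGroup E] [Lattice E] [Module ℝ E]
  {ρ : G →* (E ≃ₗ[ℝ] E)}

namespace IsPositiveRep

variable (hρ : IsPositiveRep ρ)
include hρ

theorem map_pos (s : G) {x : E} (hx : 0 < x) : 0 < ρ s x := by
  refine lt_of_le_of_ne ?_ ((ρ s).map_ne_zero_iff.2 hx.ne').symm
  rw [← map_zero (ρ s), ← hρ]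
  exact hx.le

theorem exists_invariant_pos_linearMap [Finite G] {ψ : E →ₗ[ℝ] ℝ} (hψ : ∀ x, 0 < x → 0 < ψ x) :
    ∃ φ : E →ₗ[ℝ] ℝ, (∀ s x, φ (ρ s x) = φ x) ∧ ∀ x, 0 < x → 0 < φ x := by
  have := Fintype.ofFinite G
  refine ⟨∑ t, ψ ∘ₗ (ρ t).toLinearMap, fun s x => ?_, fun x hx => ?_⟩
  · simp only [LinearMap.sum_apply, LinearMap.comp_apply, LinearEquiv.coe_coe]
    exact Fintype.sum_equiv (Equiv.mulRight s) _ _ fun t => by simp [LinearEquiv.mul_apply]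
  · simp only [LinearMap.sum_apply, LinearMap.comp_apply, LinearEquiv.coe_coe]
    exact Finset.sum_pos (fun t _ => hψ _ (hρ.map_pos t hx)) Finset.univ_nonempty

variable [IsOrderedAddMonoid E] {b : Module.Basis ι ℝ E}

theorem exists_apply_eq_of_invariant (hb : IsOrderBasis b) {φ : E →ₗ[ℝ] ℝ}
    (hφ : ∀ s x, φ (ρ s x) = φ x) (hφb : ∀ i, φ (b i) = 1) (s : G) (i : ι) :
    ∃ j, ρ s (b i) = b j := by
  obtain ⟨j, c, -, hc⟩ :=
    hb.exists_eq_smul_of_isRieszAtom ((hb.isRieszAtom i).map (ρ s) (hρ s))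
  have hc1 : c = 1 := by simpa [hφ, hφb] using (congrArg φ hc).symm
  exact ⟨j, by rw [hc, hc1, one_smul]⟩

theorem exists_isPermutationBasis [Finite G] [Finite ι] (hb : IsOrderBasis b) :
    ∃ (_ : MulAction G ι) (b' : Module.Basis ι ℝ E), IsPermutationBasis ρ b' := by
  have := Fintype.ofFinite ι
  have hψ : ∀ x, 0 < x → 0 < (∑ i, b.coord i) x := fun x hx => by
    simpa using hb.sum_repr_pos hx
  obtain ⟨φ, hφ, hφpos⟩ := hρ.exists_invariant_pos_linearMap hψ
  obtain ⟨b', hb', hφb⟩ := hb.exists_normalized hφpos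
  choose σ hσ using hρ.exists_apply_eq_of_invariant hb' hφ hφb
  let _ : MulAction G ι :=
    { smul := σ
      one_smul := fun i => b'.injective <| (hσ 1 i).symm.trans (by simp)
      mul_smul := fun s t i => b'.injective <| (hσ (s * t) i).symm.trans <| by
        rw [map_mul, LinearEquiv.mul_apply, hσ t, hσ s]
        rfl }
  exact ⟨inferInstance, b', hb', hσ⟩

end IsPositiveRep

end PositiveRepresentations

section CosetDecompositions

open MulAction

variable {G ι J X : Type*} [Group G]

/-- Conjugacy of subgroups: `r K r⁻¹ = L` for some `r`. -/
def AreConjugate (K L : Subgroup G) : Prop :=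
  ∃ r : G, ∀ g : G, g ∈ K ↔ r * g * r⁻¹ ∈ L

/-- A family of representatives of the conjugacy classes of subgroups. -/
def IsConjTransversal (H : ι → Subgroup G) : Prop :=
  ∀ K : Subgroup G, ∃! i, AreConjugate K (H i)

/-- The `G`-set consisting of `N i` disjoint copies of `G ⧸ H i` for each `i`. -/
abbrev CosetSum (H : ι → Subgroup G) (N : ι → ℕ) : Type _ :=
  Σ i, Σ _ : Fin (N i), G ⧸ H i

variable [MulAction G X]

theorem areConjugate_stabilizer_iff {x : X} {L : Subgroup G} :
    AreConjugate (stabilizer G x) L ↔ ∃ r : G, stabilizer G (r • x) = L := by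
  have hmem : ∀ r g : G, r * g * r⁻¹ ∈ stabilizer G (r • x) ↔ g ∈ stabilizer G x := fun r g => by
    simp [mem_stabilizer_iff, mul_smul]
  refine ⟨fun ⟨r, hr⟩ => ⟨r, ?_⟩, ?_⟩
  · ext g
    rw [show g = r * (r⁻¹ * g * r) * r⁻¹ by group, hmem, hr]
  · rintro ⟨r, rfl⟩
    exact ⟨r, fun g => (hmem r g).symm⟩

theorem exists_bijective_of_orbit_representatives {K : J → Subgroup G} {p : J → X}
    (hp : Function.Bijective fun j => (Quotient.mk'' (p j) : orbitRel.Quotient G X))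
    (hK : ∀ j, stabilizer G (p j) = K j) :
    ∃ f : (Σ j, G ⧸ K j) →[G] X, Function.Bijective f := by
  obtain rfl : (fun j => stabilizer G (p j)) = K := funext hK
  refine ⟨⟨fun q => ofQuotientStabilizer G (p q.1) q.2, fun s q =>
    ofQuotientStabilizer_smul G (p q.1) s q.2⟩, ?_, fun x => ?_⟩
  · rintro ⟨j, c⟩ ⟨j', c'⟩ h
    have hfst : j = j' := hp.injective <| by
      obtain ⟨s, rfl⟩ := QuotientGroup.mk_surjective c
      obtain ⟨s', rfl⟩ := QuotientGroup.mk_surjective c'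
      exact orbitRel.Quotient.quotient_smul_eq.symm.trans <|
        (congrArg Quotient.mk'' h).trans orbitRel.Quotient.quotient_smul_eq
    subst hfst
    exact congrArg (Sigma.mk j) (injective_ofQuotientStabilizer G (p j) h)
  · obtain ⟨j, hj⟩ := hp.surjective (Quotient.mk'' x)
    obtain ⟨s, rfl⟩ := orbitRel_apply.1 (Quotient.eq''.1 hj.symm)
    exact ⟨⟨j, (s : G ⧸ stabilizer G (p j))⟩, rfl⟩

variable {H : ι → Subgroup G} {N : ι → ℕ}

theorem exists_bijective_cosetSum [Finite X] (hH : IsConjTransversal H) :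
    ∃ (N : ι → ℕ) (f : CosetSum H N →[G] X), Function.Bijective f := by
  choose cls hcls _ using fun ω : orbitRel.Quotient G X => hH (stabilizer G ω.out)
  choose r hr using fun ω => areConjugate_stabilizer_iff.1 (hcls ω)
  let N i := Nat.card {ω // cls ω = i}
  let e : (Σ i, Fin (N i)) ≃ orbitRel.Quotient G X :=
    (Equiv.sigmaCongrRight fun i => (Finite.equivFin {ω // cls ω = i}).symm).trans
      (Equiv.sigmaFiberEquiv cls)
  have he : ∀ j, cls (e j) = j.1 := fun j => ((Finite.equivFin {ω // cls ω = j.1}).symm j.2).2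
  have hmk : ∀ ω, (Quotient.mk'' (r ω • ω.out) : orbitRel.Quotient G X) = ω := fun ω =>
    orbitRel.Quotient.quotient_smul_eq.trans ω.out_eq'
  obtain ⟨f, hf⟩ := exists_bijective_of_orbit_representatives (K := fun j => H j.1)
    (p := fun j => r (e j) • (e j).out) (by simpa only [hmk] using e.bijective)
    (fun j => (hr (e j)).trans (congrArg H (he j)))
  let a := Equiv.sigmaAssoc fun i (_ : Fin (N i)) => G ⧸ H i
  exact ⟨N, ⟨f ∘ a.symm, fun s q => map_smul f s (a.symm q)⟩, hf.comp a.symm.bijective⟩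

theorem areConjugate_stabilizer_cosetSum (q : CosetSum H N) :
    AreConjugate (stabilizer G q) (H q.1) := by
  obtain ⟨i, j, c⟩ := q
  obtain ⟨r, rfl⟩ := QuotientGroup.mk_surjective c
  refine areConjugate_stabilizer_iff.2 ⟨r⁻¹, ?_⟩
  ext g
  simp [mem_stabilizer_iff, Sigma.smul_mk, QuotientGroup.eq]

theorem card_areConjugate_stabilizer (hH : IsConjTransversal H) {f : CosetSum H N →[G] X}
    (hf : Function.Bijective f) (i : ι) :
    Nat.card {x : X // AreConjugate (stabilizer G x) (H i)} = N i * (H i).index := by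
  have hiff : ∀ q : CosetSum H N, q.1 = i ↔ AreConjugate (stabilizer G (f q)) (H i) := by
    intro q
    have hq : AreConjugate (stabilizer G (f q)) (H q.1) := by
      have hstab : stabilizer G (f q) = stabilizer G q := by
        ext g
        rw [mem_stabilizer_iff, mem_stabilizer_iff, ← map_smul, hf.injective.eq_iff]
      exact hstab ▸ areConjugate_stabilizer_cosetSum q
    exact ⟨fun h => h ▸ hq, (hH _).unique hq⟩
  calc Nat.card {x : X // AreConjugate (stabilizer G x) (H i)}
      = Nat.card {q : CosetSum H N // q.1 = i} :=
        Nat.card_congr ((Equiv.ofBijective f hf).subtypeEquiv hiff).symm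
    _ = Nat.card (Fin (N i) × (G ⧸ H i)) :=
        Nat.card_congr ((Equiv.sigmaSubtype i).trans (Equiv.sigmaEquivProd _ _))
    _ = N i * (H i).index := by rw [Nat.card_prod, Nat.card_fin, Subgroup.index]

theorem existsUnique_bijective_cosetSum [Finite X] [∀ i, (H i).FiniteIndex]
    (hH : IsConjTransversal H) :
    ∃! N : ι → ℕ, ∃ f : CosetSum H N →[G] X, Function.Bijective f := by
  obtain ⟨N, f, hf⟩ := exists_bijective_cosetSum (X := X) hH
  refine ⟨N, ⟨f, hf⟩, fun M ⟨f', hf'⟩ => funext fun i => ?_⟩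
  refine Nat.eq_of_mul_eq_mul_right (H i).index_ne_zero_of_finite.bot_lt ?_
  rw [← card_areConjugate_stabilizer hH hf, ← card_areConjugate_stabilizer hH hf']

end CosetDecompositions

section MultiRep

variable {G E : Type*} [Group G] [AddCommGroup E] [Lattice E] [IsOrderedAddMonoid E] [Module ℝ E]
  {ρ : G →* (E ≃ₗ[ℝ] E)}

/-- The order direct sum of the spaces `C(G ⧸ H i)`, each taken `N i` times, as the space of
functions on the `G`-set `CosetSum H N`. -/
def cosetSumCurry {ι : Type*} (H : ι → Subgroup G) (N : ι → ℕ) :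
    (CosetSum H N → ℝ) ≃ₗ[ℝ] (∀ i, Fin (N i) → (G ⧸ H i → ℝ)) :=
  (LinearEquiv.piCurry ℝ fun i (_ : Σ _ : Fin (N i), G ⧸ H i) => ℝ).trans <|
    LinearEquiv.piCongrRight fun i => LinearEquiv.piCurry ℝ fun (_ : Fin (N i)) (_ : G ⧸ H i) => ℝ

theorem exists_orderEquiv_multiRep_iff {k : ℕ} {H : Fin k → Subgroup G}
    [∀ i, (H i).FiniteIndex] {N : Fin k → ℕ} :
    (∃ T : E ≃ₗ[ℝ] (∀ i : Fin k, Fin (N i) → (G ⧸ H i → ℝ)),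
      (∀ x y : E, x ≤ y ↔ T x ≤ T y) ∧
      ∀ (s : G) (x : E), T (ρ s x) = multiRep G H N s (T x)) ↔
    ∃ b : Module.Basis (CosetSum H N) ℝ E, IsPermutationBasis ρ b := by
  simp only [isPermutationBasis_iff_repr]
  constructor
  · rintro ⟨T, hT, hTρ⟩
    let b := Module.Basis.ofEquivFun (T.trans (cosetSumCurry H N).symm)
    have hb : ∀ x q, b.repr x q = T x q.1 q.2.1 q.2.2 := fun _ _ => rfl
    refine ⟨b, fun x => ?_, fun s x q => ?_⟩
    · rw [hT, map_zero]
      exact ⟨fun h q => h q.1 q.2.1 q.2.2, fun h i j c => h ⟨i, j, c⟩⟩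
    · rw [hb, hTρ]
      rfl
  · rintro ⟨b, hb, hbρ⟩
    refine ⟨b.equivFun.trans (cosetSumCurry H N), fun x y => ?_, fun s x => ?_⟩
    · rw [hb.le_iff]
      exact ⟨fun h i j c => h ⟨i, j, c⟩, fun h q => h q.1 q.2.1 q.2.2⟩
    · funext i j c
      exact hbρ s x ⟨i, j, c⟩

end MultiRep

/-- Every positive representation of a finite group `G` in a finite dimensional
Archimedean Riesz space is order equivalent to `n₁ π^{H₁} ⊕ ⋯ ⊕ n_k π^{H_k}` for unique
multiplicities `n₁, …, n_k`, where `H₁, …, H_k` represent the conjugacy classes of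
subgroups of `G`. -/
theorem stmt17 {G E : Type*} [Group G] [Finite G] [AddCommGroup E] [Lattice E]
    [Module ℝ E] [FiniteDimensional ℝ E]
    (hadd : ∀ x y z : E, x ≤ y → x + z ≤ y + z)
    (hsmul : ∀ (c : ℝ) (x : E), 0 ≤ c → 0 ≤ x → 0 ≤ c • x)
    (harch : RieszArchimedean E)
    (k : ℕ) (H : Fin k → Subgroup G)
    (hH : ∀ K : Subgroup G, ∃! i : Fin k, ∃ r : G, ∀ g : G, g ∈ K ↔ r * g * r⁻¹ ∈ H i)
    (ρ : G →* (E ≃ₗ[ℝ] E)) (hρ : IsPositiveRep ρ) :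
    ∃! N : Fin k → ℕ, ∃ T : E ≃ₗ[ℝ] (∀ i : Fin k, Fin (N i) → (G ⧸ H i → ℝ)),
      (∀ x y : E, x ≤ y ↔ T x ≤ T y) ∧
      ∀ (s : G) (x : E), T (ρ s x) = multiRep G H N s (T x) := by
  have : IsOrderedAddMonoid E := { add_le_add_left := fun a b h c => hadd a b c h }
  have : IsOrderedModule ℝ E := .of_smul_nonneg fun c hc x => hsmul c x hc
  obtain ⟨b, hb⟩ := harch.exists_isOrderBasis
  obtain ⟨_, b', hb'⟩ := hρ.exists_isPermutationBasis hb
  simp only [exists_orderEquiv_multiRep_iff, hb'.exists_isPermutationBasis_iff]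
  exact existsUnique_bijective_cosetSum hH
end

section
/- Let G be a group, E a Riesz space, and ρ : G → Aut⁺(E) a positive representation. Suppose F is a Riesz subspace of E (a linear subspace closed under the lattice operations) that is invariant under ρ_t for all t in a subgroup H of G, let θ = ρ|_H acting on F, and let R be a set of representatives of the left cosets G/H such that E is the order direct sum ⊕_{r ∈ R} ρ_r(F). Then for every Riesz space E', every positive representation ρ' : G → Aut⁺(E'), and every positive linear map T : F → E' satisfying T ∘ θ_t = ρ'_t ∘ T for all t ∈ H, there exists a unique positive linear map T̄ : E → E' extending T and satisfying T̄ ∘ ρ_s = ρ'_s ∘ T̄ for all s ∈ G. -/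
/-- `E` is the internal order direct sum of the family of submodules `B i`: every
element of `E` is uniquely a finite sum of elements of the `B i`, and such a sum is
positive if and only if all its terms are positive. -/
def IsInternalOrderDirectSum {E : Type*} [AddCommGroup E] [Lattice E] [Module ℝ E]
    {ι : Type*} (B : ι → Submodule ℝ E) : Prop :=
  (∀ x : E, ∃ f : ι →₀ E, (∀ i, f i ∈ B i) ∧ f.sum (fun _ v => v) = x) ∧
  (∀ f : ι →₀ E, (∀ i, f i ∈ B i) → f.sum (fun _ v => v) = 0 → f = 0) ∧
  (∀ f : ι →₀ E, (∀ i, f i ∈ B i) → (0 ≤ f.sum (fun _ v => v) ↔ ∀ i, 0 ≤ f i))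

universe u

/-!
As `ρ_r` is invertible, `ρ'_r ∘ T ∘ ρ_r⁻¹` is a linear map on the summand `ρ_r(F)`, and these maps
assemble to the only candidate `T̄` on `E = ⊕_{r ∈ R} ρ_r(F)`. Every `s : G` is `r * t` with
`r ∈ R`, `t ∈ H`, so the `H`-equivariance of `T` upgrades `T̄ (ρ_r x) = ρ'_r (T x)` from `r ∈ R` to
all of `G`, whence `T̄` intertwines `ρ` and `ρ'`. It is positive because a positive element of `E`
is a sum of positive elements of the summands, on each of which `T̄` is a composite of positive
maps.
-/

section InternalDirectSum

variable {k ι M N : Type*} [Semiring k] [AddCommMonoid M] [Module k M] [AddCommMonoid N]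
  [Module k N] {A : ι → Submodule k M}

theorem exists_linearMap_eq_on_summands [DecidableEq ι] (hA : DirectSum.IsInternal A)
    (f : ∀ i, A i →ₗ[k] N) : ∃ S : M →ₗ[k] N, ∀ i (x : A i), S x = f i x := by
  let e := LinearEquiv.ofBijective (DirectSum.coeLinearMap A) hA
  refine ⟨DirectSum.toModule k ι N f ∘ₗ e.symm.toLinearMap, fun i x => ?_⟩
  have he : e.symm (x : M) = DirectSum.lof k ι (fun i => A i) i x :=
    e.symm_apply_eq.2 (DirectSum.coeLinearMap_lof A i x).symm
  simp only [LinearMap.comp_apply, LinearEquiv.coe_coe, he, DirectSum.toModule_lof]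

theorem linearMap_ext_of_iSup_eq_top (hA : ⨆ i, A i = ⊤) {S S' : M →ₗ[k] N}
    (h : ∀ i, ∀ x ∈ A i, S x = S' x) : S = S' := by
  have hle : ⨆ i, A i ≤ LinearMap.eqLocus S S' := iSup_le h
  exact LinearMap.eqLocus_eq_top.1 (top_le_iff.1 (hA ▸ hle))

theorem map_nonneg_of_nonneg_on_summands [Preorder M] [Preorder N] [IsOrderedAddMonoid N]
    (hpos : ∀ x : M, 0 ≤ x → ∃ f : ι →₀ M, (∀ i, f i ∈ A i ∧ 0 ≤ f i) ∧
      f.sum (fun _ v => v) = x)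
    {S : M →ₗ[k] N} (hS : ∀ i, ∀ x ∈ A i, 0 ≤ x → 0 ≤ S x) {x : M} (hx : 0 ≤ x) :
    0 ≤ S x := by
  obtain ⟨f, hf, rfl⟩ := hpos x hx
  rw [map_finsuppSum]
  exact Finset.sum_nonneg fun i _ => hS i (f i) (hf i).1 (hf i).2

end InternalDirectSum

section InducedExtension

variable {k G E E' : Type*} [Semiring k] [Group G] [AddCommMonoid E] [Module k E]
  [AddCommMonoid E'] [Module k E'] {ρ : G →* (E ≃ₗ[k] E)} {ρ' : G →* (E' ≃ₗ[k] E')}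
  {F : Submodule k E} {R : Set G}

theorem exists_linearMap_apply_translate [DecidableEq R]
    (hdirect : DirectSum.IsInternal fun r : R => F.map (ρ (r : G)).toLinearMap)
    (ρ' : G →* (E' ≃ₗ[k] E')) (T : F →ₗ[k] E') :
    ∃ S : E →ₗ[k] E', ∀ r ∈ R, ∀ x : F, S (ρ r x) = ρ' r (T x) := by
  obtain ⟨S, hS⟩ := exists_linearMap_eq_on_summands hdirect fun r =>
    (ρ' (r : G)).toLinearMap ∘ₗ T ∘ₗ ((ρ (r : G)).submoduleMap F).symm.toLinearMap
  refine ⟨S, fun r hr x => (hS ⟨r, hr⟩ ((ρ r).submoduleMap F x)).trans ?_⟩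
  simp only [LinearMap.comp_apply, LinearEquiv.coe_coe, LinearEquiv.symm_apply_apply]

theorem apply_translate_of_forall_mem {H : Subgroup G}
    (hinv : ∀ t ∈ H, ∀ x ∈ F, ρ t x ∈ F) (hR : ∀ s : G, ∃ r ∈ R, r⁻¹ * s ∈ H)
    {T : F →ₗ[k] E'}
    (hT : ∀ (t : G) (ht : t ∈ H) (x : F), T ⟨ρ t x, hinv t ht x x.2⟩ = ρ' t (T x))
    {S : E →ₗ[k] E'} (hS : ∀ r ∈ R, ∀ x : F, S (ρ r x) = ρ' r (T x)) (s : G) (x : F) :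
    S (ρ s x) = ρ' s (T x) := by
  obtain ⟨r, hr, ht⟩ := hR s
  obtain ⟨t, rfl⟩ : ∃ t, s = r * t := ⟨r⁻¹ * s, (mul_inv_cancel_left r s).symm⟩
  rw [inv_mul_cancel_left] at ht
  calc S (ρ (r * t) x) = S (ρ r (ρ t x)) := by rw [map_mul, LinearEquiv.mul_apply]
    _ = ρ' r (T ⟨ρ t x, hinv t ht x x.2⟩) := hS r hr ⟨ρ t x, hinv t ht x x.2⟩
    _ = ρ' r (ρ' t (T x)) := by rw [hT t ht]
    _ = ρ' (r * t) (T x) := by rw [map_mul, LinearEquiv.mul_apply]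

theorem map_rep_of_apply_translate (htop : ⨆ r : R, F.map (ρ (r : G)).toLinearMap = ⊤)
    {T : F →ₗ[k] E'} {S : E →ₗ[k] E'} (hS : ∀ (s : G) (x : F), S (ρ s x) = ρ' s (T x))
    (s : G) (x : E) : S (ρ s x) = ρ' s (S x) := by
  suffices h : S ∘ₗ (ρ s).toLinearMap = (ρ' s).toLinearMap ∘ₗ S from LinearMap.congr_fun h x
  refine linearMap_ext_of_iSup_eq_top htop ?_
  rintro r _ ⟨y, hy, rfl⟩
  calc S (ρ s (ρ r y)) = S (ρ (s * r) y) := by rw [map_mul, LinearEquiv.mul_apply]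
    _ = ρ' (s * r) (T ⟨y, hy⟩) := hS (s * r) ⟨y, hy⟩
    _ = ρ' s (ρ' r (T ⟨y, hy⟩)) := by rw [map_mul, LinearEquiv.mul_apply]
    _ = ρ' s (S (ρ r y)) := by rw [hS r ⟨y, hy⟩]

theorem eq_of_map_rep_of_eqOn (htop : ⨆ r : R, F.map (ρ (r : G)).toLinearMap = ⊤)
    {S S' : E →ₗ[k] E'} (hS : ∀ (s : G) (x : E), S (ρ s x) = ρ' s (S x))
    (hS' : ∀ (s : G) (x : E), S' (ρ s x) = ρ' s (S' x)) (h : ∀ x ∈ F, S x = S' x) :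
    S = S' := by
  refine linearMap_ext_of_iSup_eq_top htop ?_
  rintro r _ ⟨y, hy, rfl⟩
  exact (hS r y).trans ((congrArg (ρ' r) (h y hy)).trans (hS' r y).symm)

theorem map_nonneg_of_apply_translate [Preorder E] [Preorder E'] [IsOrderedAddMonoid E']
    (hρ : ∀ (s : G) (x : E), 0 ≤ x → 0 ≤ ρ s x)
    (hρ' : ∀ (s : G) (x : E'), 0 ≤ x → 0 ≤ ρ' s x)
    (hpos : ∀ x : E, 0 ≤ x → ∃ f : R →₀ E,
      (∀ r : R, f r ∈ F.map (ρ (r : G)).toLinearMap ∧ 0 ≤ f r) ∧ f.sum (fun _ v => v) = x)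
    {T : F →ₗ[k] E'} (hT : ∀ x : F, 0 ≤ (x : E) → 0 ≤ T x) {S : E →ₗ[k] E'}
    (hS : ∀ r ∈ R, ∀ x : F, S (ρ r x) = ρ' r (T x)) {x : E} (hx : 0 ≤ x) : 0 ≤ S x := by
  refine map_nonneg_of_nonneg_on_summands hpos ?_ hx
  rintro r _ ⟨y, hy, rfl⟩ hry
  have hy0 : 0 ≤ y := by
    simpa only [LinearEquiv.coe_coe, map_inv, LinearEquiv.coe_inv, LinearEquiv.symm_apply_apply]
      using hρ (r : G)⁻¹ _ hry
  exact (hρ' r _ (hT ⟨y, hy⟩ hy0)).trans_eq (hS r r.2 ⟨y, hy⟩).symm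

end InducedExtension

theorem stmt19_general {k G E E' : Type*} [Semiring k] [Group G]
    [AddCommMonoid E] [Preorder E] [Module k E]
    [AddCommMonoid E'] [Preorder E'] [IsOrderedAddMonoid E'] [Module k E']
    (ρ : G →* (E ≃ₗ[k] E)) (hρ : ∀ (s : G) (x : E), 0 ≤ x → 0 ≤ ρ s x)
    (ρ' : G →* (E' ≃ₗ[k] E')) (hρ' : ∀ (s : G) (x : E'), 0 ≤ x → 0 ≤ ρ' s x)
    (H : Subgroup G) (F : Submodule k E) (hinv : ∀ t ∈ H, ∀ x ∈ F, ρ t x ∈ F)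
    (R : Set G) [DecidableEq R] (hR : ∀ s : G, ∃ r ∈ R, r⁻¹ * s ∈ H)
    (hdirect : DirectSum.IsInternal fun r : R => F.map (ρ (r : G)).toLinearMap)
    (hpos : ∀ x : E, 0 ≤ x → ∃ f : R →₀ E,
      (∀ r : R, f r ∈ F.map (ρ (r : G)).toLinearMap ∧ 0 ≤ f r) ∧ f.sum (fun _ v => v) = x)
    (T : F →ₗ[k] E') (hTpos : ∀ x : F, 0 ≤ (x : E) → 0 ≤ T x)
    (hT : ∀ (t : G) (ht : t ∈ H) (x : F), T ⟨ρ t x, hinv t ht x x.2⟩ = ρ' t (T x)) :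
    ∃! Tbar : E →ₗ[k] E',
      (∀ x : E, 0 ≤ x → 0 ≤ Tbar x) ∧
      (∀ x : F, Tbar x = T x) ∧
      ∀ (s : G) (x : E), Tbar (ρ s x) = ρ' s (Tbar x) := by
  have htop := hdirect.submodule_iSup_eq_top
  obtain ⟨S, hSR⟩ := exists_linearMap_apply_translate hdirect ρ' T
  have hSG : ∀ (s : G) (x : F), S (ρ s x) = ρ' s (T x) :=
    apply_translate_of_forall_mem hinv hR hT hSR
  have hSF (x : F) : S x = T x := by
    simpa only [map_one, LinearEquiv.coe_one, id_eq] using hSG 1 x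
  have hSρ : ∀ (s : G) (x : E), S (ρ s x) = ρ' s (S x) := map_rep_of_apply_translate htop hSG
  refine ⟨S, ⟨fun x => map_nonneg_of_apply_translate hρ hρ' hpos hTpos hSR, hSF, hSρ⟩, ?_⟩
  rintro S' ⟨-, hSF', hSρ'⟩
  exact eq_of_map_rep_of_eqOn htop hSρ' hSρ fun x hx => (hSF' ⟨x, hx⟩).trans (hSF ⟨x, hx⟩).symm

section Riesz

variable {E : Type*} [AddCommGroup E] [Lattice E] [Module ℝ E]

theorem IsPositiveRep.map_nonneg {G : Type*} [Group G] {ρ : G →* (E ≃ₗ[ℝ] E)}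
    (hρ : IsPositiveRep ρ) (s : G) (x : E) (hx : 0 ≤ x) : 0 ≤ ρ s x := by
  simpa only [map_zero] using (hρ s 0 x).1 hx

namespace IsInternalOrderDirectSum

variable {ι : Type*} {B : ι → Submodule ℝ E}

theorem iSup_eq_top (hB : IsInternalOrderDirectSum B) : ⨆ i, B i = ⊤ :=
  eq_top_iff.2 fun x _ => (Submodule.mem_iSup_iff_exists_finsupp B x).2 (hB.1 x)

protected theorem iSupIndep (hB : IsInternalOrderDirectSum B) : iSupIndep B := by
  classical
  refine (iSupIndep_iff_finsetSum_eq_zero_imp_eq_zero B).2 fun s v hv hsum i hi => ?_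
  let f : ι →₀ E := Finsupp.indicator s fun i _ => v i
  have hmem (j : ι) : f j ∈ B j := by
    by_cases hj : j ∈ s
    · simpa only [f, Finsupp.indicator_of_mem hj] using hv j hj
    · simp only [f, Finsupp.indicator_of_notMem hj, zero_mem]
  have hf : f = 0 :=
    hB.2.1 f hmem ((Finsupp.sum_indicator_index (h := fun _ x => x) v fun _ _ => rfl).trans hsum)
  simpa only [f, Finsupp.indicator_of_mem hi, Finsupp.zero_apply] using DFunLike.congr_fun hf i

theorem isInternal [DecidableEq ι] (hB : IsInternalOrderDirectSum B) :
    DirectSum.IsInternal B :=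
  DirectSum.isInternal_submodule_of_iSupIndep_of_iSup_eq_top hB.iSupIndep hB.iSup_eq_top

theorem exists_nonneg_decomposition (hB : IsInternalOrderDirectSum B) (x : E) (hx : 0 ≤ x) :
    ∃ f : ι →₀ E, (∀ i, f i ∈ B i ∧ 0 ≤ f i) ∧ f.sum (fun _ v => v) = x := by
  obtain ⟨f, hf, rfl⟩ := hB.1 x
  exact ⟨f, fun i => ⟨hf i, (hB.2.2 f hf).1 hx i⟩, rfl⟩

end IsInternalOrderDirectSum

end Riesz

/-- The universal property of induced ordered modules: if `F` is an `H`-invariant Riesz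
subspace of `E` with `E = ⊕_{r ∈ R} ρ_r(F)` (for `R` a system of representatives of
`G/H`), then every positive linear map `T : F → E'` intertwining `ρ|_H` with a positive
representation `ρ'` of `G` extends uniquely to a positive linear map `T̄ : E → E'`
intertwining `ρ` with `ρ'`. -/
theorem stmt19 {G E : Type*} [Group G] [AddCommGroup E] [Lattice E] [Module ℝ E]
    (hadd : ∀ x y z : E, x ≤ y → x + z ≤ y + z)
    (hsmul : ∀ (c : ℝ) (x : E), 0 ≤ c → 0 ≤ x → 0 ≤ c • x)
    (ρ : G →* (E ≃ₗ[ℝ] E)) (hρ : IsPositiveRep ρ)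
    (H : Subgroup G) (F : Submodule ℝ E)
    (hsub : ∀ x y : E, x ∈ F → y ∈ F → x ⊔ y ∈ F ∧ x ⊓ y ∈ F)
    (hinv : ∀ t ∈ H, ∀ x ∈ F, ρ t x ∈ F)
    (R : Set G) (hR : ∀ s : G, ∃! r : G, r ∈ R ∧ r⁻¹ * s ∈ H)
    (hdirect : IsInternalOrderDirectSum fun r : R => F.map (ρ (r : G)).toLinearMap) :
    ∀ (E' : Type u) [AddCommGroup E'] [Lattice E'] [Module ℝ E'],
      (∀ x y z : E', x ≤ y → x + z ≤ y + z) →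
      (∀ (c : ℝ) (x : E'), 0 ≤ c → 0 ≤ x → 0 ≤ c • x) →
      ∀ (ρ' : G →* (E' ≃ₗ[ℝ] E')), IsPositiveRep ρ' →
      ∀ T : F →ₗ[ℝ] E',
        (∀ x : F, 0 ≤ (x : E) → 0 ≤ T x) →
        (∀ (t : G) (ht : t ∈ H) (x : F), T ⟨ρ t x, hinv t ht x x.2⟩ = ρ' t (T x)) →
        ∃! Tbar : E →ₗ[ℝ] E',
          (∀ x : E, 0 ≤ x → 0 ≤ Tbar x) ∧
          (∀ x : F, Tbar x = T x) ∧
          ∀ (s : G) (x : E), Tbar (ρ s x) = ρ' s (Tbar x) := by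
  intro E' _ _ _ hadd' _ ρ' hρ' T hTpos hT
  classical
  have : IsOrderedAddMonoid E' := { add_le_add_left := fun x y hxy z => hadd' x y z hxy }
  exact stmt19_general ρ hρ.map_nonneg ρ' hρ'.map_nonneg H F hinv R (fun s => (hR s).exists)
    hdirect.isInternal hdirect.exists_nonneg_decomposition T hTpos hT
end
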